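/- The intersection of the image of H in H_{Z[q^{±1}]} with the commutative subalgebra A generated over Z[q^{±1}] by Y_1^{±1}, Y_2^{±1}, Y_3^{±1} equals the Z[q]-subalgebra of H_{Z[q^{±1}]} generated by (Y_1Y_2Y_3)^{±1}, by q(Y_iY_j)^{±1} for 1 ≤ i ≠ j ≤ 3, and by qY_i^{±1} for 1 ≤ i ≤ 3. -/

import Mathlib

/-- The defining relations of the affine Hecke algebra of type `A_2` (for `Gl_3`),
on the free algebra on four generators `T = X 0`, `T⁻¹ = X 1`, `S_1 = X 2`, `S_2 = X 3`. -/
inductive HeckeRel (R : Type) [CommRing R] (q : R) :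
    FreeAlgebra R (Fin 4) → FreeAlgebra R (Fin 4) → Prop
  | TTinv : HeckeRel R q (FreeAlgebra.ι R 0 * FreeAlgebra.ι R 1) 1
  | TinvT : HeckeRel R q (FreeAlgebra.ι R 1 * FreeAlgebra.ι R 0) 1
  | quad : HeckeRel R q
      ((FreeAlgebra.ι R 2 + 1) * (FreeAlgebra.ι R 2 - algebraMap R (FreeAlgebra R (Fin 4)) q)) 0
  | T3S1 : HeckeRel R q (FreeAlgebra.ι R 0 ^ 3 * FreeAlgebra.ι R 2)
      (FreeAlgebra.ι R 2 * FreeAlgebra.ι R 0 ^ 3)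
  | braid : HeckeRel R q (FreeAlgebra.ι R 2 * FreeAlgebra.ι R 3 * FreeAlgebra.ι R 2)
      (FreeAlgebra.ι R 3 * FreeAlgebra.ι R 2 * FreeAlgebra.ι R 3)
  | TS2 : HeckeRel R q (FreeAlgebra.ι R 0 * FreeAlgebra.ι R 3)
      (FreeAlgebra.ι R 2 * FreeAlgebra.ι R 0)

/-- The affine Hecke algebra `H_R` with parameter `q ∈ R`. -/
abbrev HeckeAlg (R : Type) [CommRing R] (q : R) := RingQuot (HeckeRel R q)

namespace HeckeAlg

variable (R : Type) [CommRing R] (q : R)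

noncomputable def gen (i : Fin 4) : HeckeAlg R q :=
  RingQuot.mkAlgHom R (HeckeRel R q) (FreeAlgebra.ι R i)

noncomputable def T : HeckeAlg R q := gen R q 0
noncomputable def Tinv : HeckeAlg R q := gen R q 1
noncomputable def S1 : HeckeAlg R q := gen R q 2
noncomputable def S2 : HeckeAlg R q := gen R q 3

theorem T_mul_Tinv : T R q * Tinv R q = 1 := by
  simpa [T, Tinv, gen, map_mul, map_one] using
    RingQuot.mkAlgHom_rel R (HeckeRel.TTinv (R := R) (q := q))

theorem Tinv_mul_T : Tinv R q * T R q = 1 := by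
  simpa [T, Tinv, gen, map_mul, map_one] using
    RingQuot.mkAlgHom_rel R (HeckeRel.TinvT (R := R) (q := q))

theorem quad_rel : (S1 R q + 1) * (S1 R q - algebraMap R (HeckeAlg R q) q) = 0 := by
  simpa [S1, gen, map_mul, map_add, map_sub, map_one, map_zero, AlgHom.commutes] using
    RingQuot.mkAlgHom_rel R (HeckeRel.quad (R := R) (q := q))

theorem T3_mul_S1 : T R q ^ 3 * S1 R q = S1 R q * T R q ^ 3 := by
  simpa [T, S1, gen, map_mul, map_pow] using
    RingQuot.mkAlgHom_rel R (HeckeRel.T3S1 (R := R) (q := q))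

theorem braid_rel : S1 R q * S2 R q * S1 R q = S2 R q * S1 R q * S2 R q := by
  simpa [S1, S2, gen, map_mul] using
    RingQuot.mkAlgHom_rel R (HeckeRel.braid (R := R) (q := q))

theorem T_mul_S2 : T R q * S2 R q = S1 R q * T R q := by
  simpa [T, S1, S2, gen, map_mul] using
    RingQuot.mkAlgHom_rel R (HeckeRel.TS2 (R := R) (q := q))

/-- The canonical (base change) ring homomorphism `H_R → H_S` induced by a ring
homomorphism `R → S` sending the parameter `q` to the parameter `q'`. -/
noncomputable def map {R S : Type} [CommRing R] [CommRing S] (f : R →+* S) (q : R) (q' : S)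
    (h : f q = q') : HeckeAlg R q →+* HeckeAlg S q' := by
  subst h
  letI : Algebra R (HeckeAlg S (f q)) :=
    RingHom.toAlgebra' ((algebraMap S (HeckeAlg S (f q))).comp f)
      (fun c x => by simpa using Algebra.commutes (f c) x)
  refine RingQuot.lift
    ⟨((FreeAlgebra.lift R fun i => gen S (f q) i : _ →ₐ[R] HeckeAlg S (f q)) :
        FreeAlgebra R (Fin 4) →+* HeckeAlg S (f q)), ?_⟩
  have key : ∀ i : Fin 4,
      (FreeAlgebra.lift R fun j => gen S (f q) j) (FreeAlgebra.ι R i) = gen S (f q) i :=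
    fun i => FreeAlgebra.lift_ι_apply _ _
  have keyq : (FreeAlgebra.lift R fun j => gen S (f q) j)
      (algebraMap R (FreeAlgebra R (Fin 4)) q) = algebraMap S (HeckeAlg S (f q)) (f q) := by
    rw [AlgHom.commutes]
    rfl
  intro a b hab
  cases hab with
  | TTinv => simpa [key, T, Tinv] using T_mul_Tinv S (f q)
  | TinvT => simpa [key, T, Tinv] using Tinv_mul_T S (f q)
  | quad => simpa [key, keyq, S1] using quad_rel S (f q)
  | T3S1 => simpa [key, T, S1] using T3_mul_S1 S (f q)
  | braid => simpa [key, S1, S2] using braid_rel S (f q)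
  | TS2 => simpa [key, T, S1, S2] using T_mul_S2 S (f q)

/-- `S_1⁻¹ = q⁻¹ (S_1 - q + 1)`, where `qi` is an inverse of `q` in `R`. -/
noncomputable def S1i (qi : R) : HeckeAlg R q :=
  algebraMap R (HeckeAlg R q) qi * (S1 R q - algebraMap R (HeckeAlg R q) q + 1)

/-- `S_2⁻¹ = q⁻¹ (S_2 - q + 1)`, where `qi` is an inverse of `q` in `R`. -/
noncomputable def S2i (qi : R) : HeckeAlg R q :=
  algebraMap R (HeckeAlg R q) qi * (S2 R q - algebraMap R (HeckeAlg R q) q + 1)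

/-- The Bernstein elements `Y_1 = q S_1⁻¹ S_2⁻¹ T`, `Y_2 = S_2⁻¹ T S_1`,
`Y_3 = q⁻¹ T S_1 S_2`, where `qi` is an inverse of `q` in `R`. -/
noncomputable def Y (qi : R) : Fin 3 → HeckeAlg R q :=
  ![algebraMap R (HeckeAlg R q) q * S1i R q qi * S2i R q qi * T R q,
    S2i R q qi * T R q * S1 R q,
    algebraMap R (HeckeAlg R q) qi * T R q * S1 R q * S2 R q]

end HeckeAlg

noncomputable section

/-- `H`, the affine Hecke algebra over `ℤ[q]` (with `q` an indeterminate). -/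
abbrev HPoly : Type := HeckeAlg (Polynomial ℤ) Polynomial.X

/-- `H_{ℤ[q^{±1}]}`, the base change of `H` to the Laurent polynomial ring `ℤ[q,q⁻¹]`. -/
abbrev HLau : Type := HeckeAlg (LaurentPolynomial ℤ) (LaurentPolynomial.T 1)

/-- The canonical map `ι : H → H_{ℤ[q^{±1}]}`. -/
def ιLau : HPoly →+* HLau :=
  HeckeAlg.map Polynomial.toLaurent Polynomial.X (LaurentPolynomial.T 1) Polynomial.toLaurent_X

/-- The Bernstein elements `Y_1, Y_2, Y_3` of `H_{ℤ[q^{±1}]}`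
(where `S_i⁻¹ = q⁻¹(S_i - q + 1)` and `q⁻¹` is the Laurent monomial `T (-1)`). -/
def YLau : Fin 3 → HLau :=
  HeckeAlg.Y (LaurentPolynomial ℤ) (LaurentPolynomial.T 1) (LaurentPolynomial.T (-1))

/-- The image of `q` in `H_{ℤ[q^{±1}]}`. -/
def qLau : HLau := algebraMap (LaurentPolynomial ℤ) HLau (LaurentPolynomial.T 1)

/-- The image of `q⁻¹` in `H_{ℤ[q^{±1}]}`. -/
def qLauInv : HLau := algebraMap (LaurentPolynomial ℤ) HLau (LaurentPolynomial.T (-1))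

/-- The structure map of the `ℤ[q]`-algebra `H_{ℤ[q^{±1}]}`, i.e. `ℤ[q] → ℤ[q,q⁻¹] → H_{ℤ[q^{±1}]}`.
A `ℤ[q]`-subalgebra of `H_{ℤ[q^{±1}]}` is a subring containing the range of this map. -/
def structZq : Polynomial ℤ →+* HLau :=
  (algebraMap (LaurentPolynomial ℤ) HLau).comp Polynomial.toLaurent

end

/-!
The affine Hecke algebra acts on the fraction field of the group algebra of `ℤ³`: `S₁`, `S₂` act by
Demazure–Lusztig operators and `T` is arranged so that `Yᵢ` acts as multiplication by `Xᵢ`. A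
computation on monomials shows that the image of `H` preserves the lattice spanned over `ℤ[q]` by
the `q ^ (max l - min l) X^l`. This lattice contains `1`, so if a Laurent polynomial `F(Y)`
lies in the image of `H`, then applying it to `1` shows that `F` lies in the lattice.

Splitting an exponent `l` into its standard steps writes each `q ^ (max l - min l) Y^l` as a product
of `(Y₁Y₂Y₃)^{±1}` and the `qYᵢ^{±1}`. Conversely these generators are words without negative
powers of `q` in the generators of `H`, for example `qY₃ = T S₁ S₂`.
-/

namespace HeckeAlg

section BernsteinWord

variable {G : Type*} [Group G]

/-- The words `Q s₁⁻¹ s₂⁻¹ t`, `s₂⁻¹ t s₁`, `Q⁻¹ t s₁ s₂` defining the Bernstein elements `Y₁`,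
`Y₂`, `Y₃`, in an arbitrary group. -/
def bernsteinWord (Q t s₁ s₂ : G) : Fin 3 → G :=
  ![Q * s₁⁻¹ * s₂⁻¹ * t, s₂⁻¹ * t * s₁, Q⁻¹ * t * s₁ * s₂]

theorem map_bernsteinWord {H : Type*} [Group H] (φ : G →* H) (Q t s₁ s₂ : G) (i : Fin 3) :
    φ (bernsteinWord Q t s₁ s₂ i) = bernsteinWord (φ Q) (φ t) (φ s₁) (φ s₂) i := by
  fin_cases i <;> simp [bernsteinWord]

section Integrality

variable {Q t s₁ s₂ : G} {N : Submonoid G}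

theorem mul_bernsteinWord_mem (hQ : ∀ g, Commute Q g) (ht : t ∈ N) (h₁ : s₁ ∈ N) (h₂ : s₂ ∈ N)
    (h₁' : Q * s₁⁻¹ ∈ N) (h₂' : Q * s₂⁻¹ ∈ N) (i : Fin 3) :
    Q * bernsteinWord Q t s₁ s₂ i ∈ N := by
  have hY₀ : Q * (Q * s₁⁻¹ * s₂⁻¹ * t) = Q * s₁⁻¹ * (Q * s₂⁻¹) * t :=
    calc _ = Q * (Q * s₁⁻¹) * (s₂⁻¹ * t) := by group
      _ = Q * s₁⁻¹ * (Q * s₂⁻¹) * t := by rw [(hQ _).eq]; group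
  have hY₁ : Q * (s₂⁻¹ * t * s₁) = Q * s₂⁻¹ * t * s₁ := by group
  have hY₂ : Q * (Q⁻¹ * t * s₁ * s₂) = t * s₁ * s₂ := by group
  fin_cases i
  · exact hY₀ ▸ mul_mem (mul_mem h₁' h₂') ht
  · exact hY₁ ▸ mul_mem (mul_mem h₂' ht) h₁
  · exact hY₂ ▸ mul_mem (mul_mem ht h₁) h₂

theorem mul_inv_bernsteinWord_mem (hQ : ∀ g, Commute Q g) (ht : t⁻¹ ∈ N) (h₁ : s₁ ∈ N)
    (h₂ : s₂ ∈ N) (h₁' : Q * s₁⁻¹ ∈ N) (h₂' : Q * s₂⁻¹ ∈ N) (i : Fin 3) :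
    Q * (bernsteinWord Q t s₁ s₂ i)⁻¹ ∈ N := by
  have hY₀ : Q * (Q * s₁⁻¹ * s₂⁻¹ * t)⁻¹ = t⁻¹ * s₂ * s₁ := by
    rw [(hQ _).eq]; group
  have hY₁ : Q * (s₂⁻¹ * t * s₁)⁻¹ = Q * s₁⁻¹ * t⁻¹ * s₂ := by group
  have hY₂ : Q * (Q⁻¹ * t * s₁ * s₂)⁻¹ = Q * s₂⁻¹ * (Q * s₁⁻¹) * t⁻¹ :=
    calc _ = Q * (s₂⁻¹ * (s₁⁻¹ * t⁻¹ * Q)) := by group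
      _ = Q * s₂⁻¹ * (Q * s₁⁻¹) * t⁻¹ := by rw [← (hQ _).eq]; group
  fin_cases i
  · exact hY₀ ▸ mul_mem (mul_mem ht h₂) h₁
  · exact hY₁ ▸ mul_mem (mul_mem h₁' ht) h₂
  · exact hY₂ ▸ mul_mem (mul_mem h₂' h₁') ht

end Integrality

section BraidRelations

variable {Q t s₁ s₂ : G}

theorem commute_cube_of_mul_eq (ht₁ : Commute (t ^ 3) s₁) (ht : t * s₂ = s₁ * t) :
    Commute (t ^ 3) s₂ := by
  have hs₂ : s₂ = t⁻¹ * s₁ * t := by rw [mul_assoc, ← ht, inv_mul_cancel_left]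
  have htt : Commute (t ^ 3) t := Commute.pow_self t 3
  exact hs₂ ▸ (htt.inv_right.mul_right ht₁).mul_right htt

theorem mul_sq_eq_of_commute_cube (ht₁ : Commute (t ^ 3) s₁) (ht : t * s₂ = s₁ * t) :
    s₂ * t ^ 2 = t ^ 2 * s₁ := by
  apply mul_left_cancel (a := t)
  calc t * (s₂ * t ^ 2) = t * s₂ * t ^ 2 := (mul_assoc _ _ _).symm
    _ = s₁ * t ^ 3 := by rw [ht]; group
    _ = t ^ 3 * s₁ := ht₁.eq.symm
    _ = t * (t ^ 2 * s₁) := by group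

theorem bernsteinWord_two_mul_one (ht : t * s₂ = s₁ * t) :
    bernsteinWord Q t s₁ s₂ 2 * bernsteinWord Q t s₁ s₂ 1 = Q⁻¹ * t ^ 2 * s₂ * s₁ :=
  calc Q⁻¹ * t * s₁ * s₂ * (s₂⁻¹ * t * s₁) = Q⁻¹ * t * (s₁ * t) * s₁ := by group
    _ = Q⁻¹ * t ^ 2 * s₂ * s₁ := by rw [← ht]; simp only [sq, mul_assoc]

theorem bernsteinWord_one_mul_two (hQ : ∀ g, Commute Q g) (hs : s₁ * s₂ * s₁ = s₂ * s₁ * s₂)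
    (ht₁ : Commute (t ^ 3) s₁) (ht : t * s₂ = s₁ * t) :
    bernsteinWord Q t s₁ s₂ 1 * bernsteinWord Q t s₁ s₂ 2 = Q⁻¹ * t ^ 2 * s₂ * s₁ :=
  calc s₂⁻¹ * t * s₁ * (Q⁻¹ * t * s₁ * s₂) = s₂⁻¹ * t * s₁ * Q⁻¹ * (t * s₁ * s₂) := by group
    _ = Q⁻¹ * (s₂⁻¹ * t * s₁) * (t * s₁ * s₂) := by rw [← (hQ _).inv_left.eq]
    _ = Q⁻¹ * s₂⁻¹ * t * (s₁ * t) * s₁ * s₂ := by group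
    _ = Q⁻¹ * s₂⁻¹ * t ^ 2 * (s₂ * s₁ * s₂) := by rw [← ht]; simp only [sq, mul_assoc]
    _ = Q⁻¹ * s₂⁻¹ * (t ^ 2 * s₁) * s₂ * s₁ := by rw [← hs]; group
    _ = Q⁻¹ * t ^ 2 * s₂ * s₁ := by rw [← mul_sq_eq_of_commute_cube ht₁ ht]; group

theorem bernsteinWord_prod (hQ : ∀ g, Commute Q g) (hs : s₁ * s₂ * s₁ = s₂ * s₁ * s₂)
    (ht₁ : Commute (t ^ 3) s₁) (ht : t * s₂ = s₁ * t) :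
    bernsteinWord Q t s₁ s₂ 0 * (bernsteinWord Q t s₁ s₂ 1 * bernsteinWord Q t s₁ s₂ 2) =
      t ^ 3 := by
  have ht₂ : Commute (t ^ 3) (s₂ * s₁) := (commute_cube_of_mul_eq ht₁ ht).mul_right ht₁
  rw [bernsteinWord_one_mul_two hQ hs ht₁ ht]
  calc Q * s₁⁻¹ * s₂⁻¹ * t * (Q⁻¹ * t ^ 2 * s₂ * s₁)
      = Q * (s₁⁻¹ * s₂⁻¹ * t * Q⁻¹) * (t ^ 2 * s₂ * s₁) := by group
    _ = s₁⁻¹ * s₂⁻¹ * (t ^ 3 * (s₂ * s₁)) := by rw [← (hQ _).inv_left.eq]; group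
    _ = t ^ 3 := by rw [ht₂.eq]; group

theorem bernsteinWord_commute (hQ : ∀ g, Commute Q g) (hs : s₁ * s₂ * s₁ = s₂ * s₁ * s₂)
    (ht₁ : Commute (t ^ 3) s₁) (ht : t * s₂ = s₁ * t) (i j : Fin 3) :
    Commute (bernsteinWord Q t s₁ s₂ i) (bernsteinWord Q t s₁ s₂ j) := by
  have ht₂ := commute_cube_of_mul_eq ht₁ ht
  have htt : Commute (t ^ 3) t := Commute.pow_self t 3
  have htY₁ : Commute (t ^ 3) (bernsteinWord Q t s₁ s₂ 1) :=
    (ht₂.inv_right.mul_right htt).mul_right ht₁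
  have htY₂ : Commute (t ^ 3) (bernsteinWord Q t s₁ s₂ 2) :=
    (((hQ _).symm.inv_right.mul_right htt).mul_right ht₁).mul_right ht₂
  have h₁₂ : Commute (bernsteinWord Q t s₁ s₂ 1) (bernsteinWord Q t s₁ s₂ 2) :=
    (bernsteinWord_one_mul_two hQ hs ht₁ ht).trans (bernsteinWord_two_mul_one ht).symm
  have hY₀ := eq_mul_inv_of_mul_eq (bernsteinWord_prod hQ hs ht₁ ht)
  have h₀₁ : Commute (bernsteinWord Q t s₁ s₂ 0) (bernsteinWord Q t s₁ s₂ 1) :=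
    hY₀ ▸ htY₁.mul_left ((Commute.refl _).mul_left h₁₂.symm).inv_left
  have h₀₂ : Commute (bernsteinWord Q t s₁ s₂ 0) (bernsteinWord Q t s₁ s₂ 2) :=
    hY₀ ▸ htY₂.mul_left (h₁₂.mul_left (Commute.refl _)).inv_left
  fin_cases i <;> fin_cases j <;>
    first | exact Commute.refl _ | assumption | exact Commute.symm ‹_›

end BraidRelations

section ReconstructTranslation

variable {Q s₁ s₂ x y z : G}

theorem rotation_mul_eq (hQ : ∀ g, Commute Q g) (hs : s₁ * s₂ * s₁ = s₂ * s₁ * s₂)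
    (hx : Commute s₂ x) : Q⁻¹ * s₂ * s₁ * x * s₂ = s₁ * (Q⁻¹ * s₂ * s₁ * x) :=
  calc Q⁻¹ * s₂ * s₁ * x * s₂ = Q⁻¹ * s₂ * s₁ * (x * s₂) := by group
    _ = Q⁻¹ * (s₂ * s₁ * s₂) * x := by rw [← hx.eq]; group
    _ = Q⁻¹ * s₁ * (s₂ * s₁ * x) := by rw [← hs]; group
    _ = s₁ * (Q⁻¹ * s₂ * s₁ * x) := by rw [(hQ s₁).inv_left.eq]; group

theorem bernsteinWord_rotation (hQ : ∀ g, Commute Q g) (hxy : s₁ * x * s₁ = Q * y)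
    (hyz : s₂ * y * s₂ = Q * z) :
    bernsteinWord Q (Q⁻¹ * s₂ * s₁ * x) s₁ s₂ = ![x, y, z] := by
  have h₀ : Q * s₁⁻¹ * s₂⁻¹ * (Q⁻¹ * s₂ * s₁ * x) = x :=
    calc _ = Q * (s₁⁻¹ * s₂⁻¹ * Q⁻¹) * (s₂ * s₁ * x) := by group
      _ = x := by rw [← (hQ _).inv_left.eq]; group
  have h₁ : s₂⁻¹ * (Q⁻¹ * s₂ * s₁ * x) * s₁ = y :=
    calc _ = s₂⁻¹ * Q⁻¹ * s₂ * (s₁ * x * s₁) := by group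
      _ = y := by rw [hxy, ← (hQ _).inv_left.eq]; group
  have h₂ : Q⁻¹ * (Q⁻¹ * s₂ * s₁ * x) * s₁ * s₂ = z :=
    calc _ = Q⁻¹ * Q⁻¹ * s₂ * (s₁ * x * s₁) * s₂ := by group
      _ = Q⁻¹ * Q⁻¹ * (s₂ * Q) * y * s₂ := by rw [hxy]; group
      _ = Q⁻¹ * (s₂ * y * s₂) := by rw [← (hQ _).eq]; group
      _ = z := by rw [hyz]; group
  simp only [bernsteinWord, h₀, h₁, h₂]

theorem rotation_cube (hQ : ∀ g, Commute Q g) (hs : s₁ * s₂ * s₁ = s₂ * s₁ * s₂)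
    (hxy : s₁ * x * s₁ = Q * y) (hyz : s₂ * y * s₂ = Q * z) (hx : Commute s₂ x) :
    (Q⁻¹ * s₂ * s₁ * x) ^ 3 = z * (y * x) := by
  have hzy := bernsteinWord_two_mul_one (Q := Q) (rotation_mul_eq hQ hs hx)
  rw [bernsteinWord_rotation hQ hxy hyz] at hzy
  set t := Q⁻¹ * s₂ * s₁ * x with ht_def
  calc t ^ 3 = t ^ 2 * Q⁻¹ * (s₂ * s₁ * x) := by rw [pow_succ]; nth_rw 2 [ht_def]; group
    _ = Q⁻¹ * t ^ 2 * s₂ * s₁ * x := by rw [← (hQ _).inv_left.eq]; group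
    _ = z * (y * x) := by rw [← hzy, mul_assoc]; rfl

end ReconstructTranslation

end BernsteinWord

section DemazureLusztig

variable {R K : Type*} [CommRing R] [Field K] [Algebra R K]

/-- The Demazure–Lusztig operator `f ↦ -s f + (q - 1) (f - s f) / (1 - r)`, where `s` plays the role
of a reflection and `r` that of the monomial attached to its root. -/
noncomputable def demazureLusztig (q : R) (s : K ≃ₐ[R] K) (r : K) : Module.End R K :=
  -s.toLinearMap + Algebra.lmul R K ((algebraMap R K q - 1) * (1 - r)⁻¹) * (1 - s.toLinearMap)

variable (q : R) {s s' : K ≃ₐ[R] K} {r r' : K}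

theorem demazureLusztig_apply (f : K) :
    demazureLusztig q s r f = -s f + (algebraMap R K q - 1) * (1 - r)⁻¹ * (f - s f) := by
  simp [demazureLusztig]

theorem demazureLusztig_quad (hs : s * s = 1) (hr : s r = r⁻¹) (hr₀ : r ≠ 0) (hr₁ : r ≠ 1) :
    (demazureLusztig q s r + 1) *
      (demazureLusztig q s r - algebraMap R (Module.End R K) q) = 0 := by
  ext f
  have hss : s (s f) = f := congr($hs f)
  have h₁ : 1 - r ≠ 0 := sub_ne_zero.2 hr₁.symm
  have h₂ : r - 1 ≠ 0 := sub_ne_zero.2 hr₁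
  simp only [Module.End.mul_apply, LinearMap.add_apply, LinearMap.sub_apply, Module.End.one_apply,
    Module.algebraMap_end_apply, LinearMap.zero_apply, Algebra.smul_def, demazureLusztig_apply,
    map_add, map_neg, map_sub, map_mul, map_inv₀, map_one, AlgEquiv.commutes, hss, hr]
  field_simp
  rw [← neg_sub r 1]
  field_simp
  ring

theorem demazureLusztig_mul_lmul_mul (hs : s * s = 1) (hr : s r = r⁻¹) (hr₀ : r ≠ 0) (hr₁ : r ≠ 1)
    {x : K} (hx : s x = r⁻¹ * x) :
    demazureLusztig q s r * Algebra.lmul R K x * demazureLusztig q s r =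
      algebraMap R (Module.End R K) q * Algebra.lmul R K (s x) := by
  ext f
  have hss : s (s f) = f := congr($hs f)
  have h₁ : 1 - r ≠ 0 := sub_ne_zero.2 hr₁.symm
  have h₂ : r - 1 ≠ 0 := sub_ne_zero.2 hr₁
  simp only [Module.End.mul_apply, Module.algebraMap_end_apply, Algebra.smul_def,
    demazureLusztig_apply, Algebra.coe_lmul_eq_mul, LinearMap.mul_apply_apply, map_add, map_neg,
    map_sub, map_mul, map_inv₀, map_one, AlgEquiv.commutes, hss, hr, hx]
  field_simp
  rw [← neg_sub r 1]
  field_simp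
  ring

theorem demazureLusztig_commute_lmul {z : K} (hz : s z = z) :
    Commute (demazureLusztig q s r) (Algebra.lmul R K z) := by
  ext f
  simp only [Module.End.mul_apply, demazureLusztig_apply, Algebra.coe_lmul_eq_mul,
    LinearMap.mul_apply_apply, map_mul, hz]
  ring

theorem demazureLusztig_braid (hs : s * s = 1) (hs' : s' * s' = 1) (hb : s * s' * s = s' * s * s')
    (hr : s r = r⁻¹) (hr' : s' r' = r'⁻¹) (hsr' : s r' = r * r') (hs'r : s' r = r * r')
    (hr₀ : r ≠ 0) (hr'₀ : r' ≠ 0) (hr₁ : r ≠ 1) (hr'₁ : r' ≠ 1) (hrr' : r * r' ≠ 1) :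
    demazureLusztig q s r * demazureLusztig q s' r' * demazureLusztig q s r =
      demazureLusztig q s' r' * demazureLusztig q s r * demazureLusztig q s' r' := by
  ext f
  have hss (f) : s (s f) = f := congr($hs f)
  have hss' (f) : s' (s' f) = f := congr($hs' f)
  have hbf : s (s' (s f)) = s' (s (s' f)) := congr($hb f)
  have h₁ : 1 - r ≠ 0 := sub_ne_zero.2 hr₁.symm
  have h₂ : r - 1 ≠ 0 := sub_ne_zero.2 hr₁
  have h₁' : 1 - r' ≠ 0 := sub_ne_zero.2 hr'₁.symm
  have h₂' : r' - 1 ≠ 0 := sub_ne_zero.2 hr'₁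
  have h₃ : 1 - r * r' ≠ 0 := sub_ne_zero.2 hrr'.symm
  simp only [Module.End.mul_apply, demazureLusztig_apply, map_add, map_neg, map_sub, map_mul,
    map_inv₀, map_one, AlgEquiv.commutes, hss, hss', hbf, hr, hr', hsr', hs'r]
  generalize s' (s (s' f)) = a
  generalize s' (s f) = b
  generalize s (s' f) = c
  generalize s f = d
  generalize s' f = e
  field_simp
  rw [← neg_sub r 1, ← neg_sub r' 1]
  field_simp
  ring

theorem demazureLusztig_of_eq_pow_mul (hr₁ : r ≠ 1) {f : K} {n : ℕ} (hf : f = r ^ n * s f) :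
    demazureLusztig q s r f =
      -s f - (algebraMap R K q - 1) * ∑ k ∈ Finset.range n, r ^ k * s f := by
  have h₁ : 1 - r ≠ 0 := sub_ne_zero.2 hr₁.symm
  have hgeom := mul_neg_geom_sum r n
  rw [← Finset.sum_mul, demazureLusztig_apply]
  nth_rw 2 [hf]
  field_simp
  linear_combination (algebraMap R K q - 1) * s f * hgeom

theorem demazureLusztig_of_apply_eq_pow_mul (hr₁ : r ≠ 1) {f : K} {n : ℕ} (hf : s f = r ^ n * f) :
    demazureLusztig q s r f =
      -s f + (algebraMap R K q - 1) * ∑ k ∈ Finset.range n, r ^ k * f := by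
  have h₁ : 1 - r ≠ 0 := sub_ne_zero.2 hr₁.symm
  have hgeom := mul_neg_geom_sum r n
  rw [← Finset.sum_mul, demazureLusztig_apply, hf]
  field_simp
  linear_combination -(algebraMap R K q - 1) * f * hgeom

end DemazureLusztig

section GroupAlgebraFractionField

open scoped AddMonoidAlgebra

variable {R M : Type*} [CommRing R] [AddCommGroup M]
variable {K : Type*} [Field K] [Algebra R[M] K]

variable (R K) in
/-- The monomial `X^l`, viewed in an extension field `K` of the group algebra `R[M]`. -/
noncomputable def monomial (l : M) : K :=
  algebraMap R[M] K (AddMonoidAlgebra.single l 1)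

theorem monomial_zero : monomial R K (0 : M) = 1 :=
  map_one (algebraMap R[M] K)

theorem monomial_add (l m : M) : monomial R K (l + m) = monomial R K l * monomial R K m := by
  rw [monomial, monomial, monomial, ← map_mul, AddMonoidAlgebra.single_mul_single, one_mul]

theorem monomial_ne_zero (l : M) : monomial R K l ≠ 0 := by
  refine left_ne_zero_of_mul_eq_one (b := monomial R K (-l)) ?_
  rw [← monomial_add, add_neg_cancel, monomial_zero]

theorem monomial_neg (l : M) : monomial R K (-l) = (monomial R K l)⁻¹ :=
  eq_inv_of_mul_eq_one_left (by rw [← monomial_add, neg_add_cancel, monomial_zero])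

theorem monomial_nsmul (n : ℕ) (l : M) : monomial R K (n • l) = monomial R K l ^ n := by
  rw [monomial, monomial, ← map_pow, AddMonoidAlgebra.single_pow, one_pow]

variable [IsFractionRing R[M] K]

theorem monomial_ne_one [Nontrivial R] {l : M} (hl : l ≠ 0) : monomial R K l ≠ 1 := by
  rw [← monomial_zero (R := R) (M := M)]
  exact fun h => hl (AddMonoidAlgebra.of_injective (IsFractionRing.injective R[M] K h))

variable [Algebra R K] [IsScalarTower R R[M] K]

theorem algEquiv_ext_monomial {φ ψ : K ≃ₐ[R] K}
    (h : ∀ l : M, φ (monomial R K l) = ψ (monomial R K l)) : φ = ψ := by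
  have hR : (φ : K →ₐ[R] K).comp (IsScalarTower.toAlgHom R R[M] K) =
      (ψ : K →ₐ[R] K).comp (IsScalarTower.toAlgHom R R[M] K) :=
    AddMonoidAlgebra.algHom_ext h (Subsingleton.elim _ _)
  have hA (a : R[M]) : φ (algebraMap R[M] K a) = ψ (algebraMap R[M] K a) := congr($hR a)
  ext f
  obtain ⟨a, b, -, rfl⟩ := IsFractionRing.div_surjective R[M] f
  rw [map_div₀, map_div₀, hA, hA]

/-- The action on the fraction field of `R[M]` induced by an automorphism of `M`. -/
noncomputable def monomialEquiv (e : M ≃ₗ[ℤ] M) : K ≃ₐ[R] K :=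
  IsFractionRing.algEquivOfAlgEquiv (AddMonoidAlgebra.domCongr R R e.toAddEquiv)

theorem monomialEquiv_monomial (e : M ≃ₗ[ℤ] M) (l : M) :
    monomialEquiv (R := R) (K := K) e (monomial R K l) = monomial R K (e l) := by
  rw [monomial, monomialEquiv, IsFractionRing.algEquivOfAlgEquiv_algebraMap,
    AddMonoidAlgebra.domCongr_single, monomial]
  rfl

variable (R M K) in
/-- The action of the automorphism group of `M` on the fraction field of `R[M]`. -/
noncomputable def monomialAut : (M ≃ₗ[ℤ] M) →* (K ≃ₐ[R] K) where
  toFun := monomialEquiv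
  map_one' := algEquiv_ext_monomial fun l : M => monomialEquiv_monomial 1 l
  map_mul' e e' := algEquiv_ext_monomial fun l : M => by
    simp only [AlgEquiv.mul_apply, monomialEquiv_monomial, LinearEquiv.mul_apply]

theorem monomialAut_monomial (e : M ≃ₗ[ℤ] M) (l : M) :
    monomialAut R M K e (monomial R K l) = monomial R K (e l) :=
  monomialEquiv_monomial e l

end GroupAlgebraFractionField

section RootOperator

open scoped AddMonoidAlgebra

variable {R M K : Type*} [CommRing R] [AddCommGroup M] [Field K] [Algebra R[M] K]
  [IsFractionRing R[M] K]
variable {α β : M} {α' β' : Module.Dual ℤ M}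

theorem monomial_root_ne_one [Nontrivial R] (hα : α' α = 2) : monomial R K α ≠ 1 :=
  monomial_ne_one fun h => by simp [h] at hα

variable [Algebra R K] [IsScalarTower R R[M] K] (q : R)

variable (K) in
/-- The Demazure–Lusztig operator attached to a root `α` with coroot `α'`. -/
noncomputable def rootOperator (hα : α' α = 2) : Module.End R K :=
  demazureLusztig q (monomialAut R M K (Module.reflection hα)) (monomial R K α)

variable (hα : α' α = 2) (hβ : β' β = 2)

theorem rootOperator_commute_lmul {l : M} (hl : α' l = 0) :
    Commute (rootOperator K q hα) (Algebra.lmul R K (monomial R K l)) :=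
  demazureLusztig_commute_lmul q <| by
    rw [monomialAut_monomial, Module.reflection_apply, hl, zero_smul, sub_zero]

theorem monomialAut_reflection_mul_self :
    monomialAut R M K (Module.reflection hα) * monomialAut R M K (Module.reflection hα) = 1 := by
  rw [← map_mul, show Module.reflection hα * Module.reflection hα = 1 from
    LinearEquiv.ext (Module.involutive_reflection hα), map_one]

theorem monomialAut_reflection_root :
    monomialAut R M K (Module.reflection hα) (monomial R K α) = (monomial R K α)⁻¹ := by
  rw [monomialAut_monomial, Module.reflection_apply_self, monomial_neg]

theorem reflection_braid (hαβ : α' β = -1) (hβα : β' α = -1) :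
    Module.reflection hα * Module.reflection hβ * Module.reflection hα =
      Module.reflection hβ * Module.reflection hα * Module.reflection hβ := by
  ext l
  simp only [LinearEquiv.mul_apply, Module.reflection_apply, map_sub, map_smul, hα, hβ, hαβ,
    hβα]
  module

variable [Nontrivial R]

theorem rootOperator_quad :
    (rootOperator K q hα + 1) * (rootOperator K q hα - algebraMap R (Module.End R K) q) = 0 :=
  demazureLusztig_quad q (monomialAut_reflection_mul_self hα) (monomialAut_reflection_root hα)
    (monomial_ne_zero α) (monomial_root_ne_one hα)

theorem rootOperator_mul_lmul_mul {l : M} (hl : α' l = 1) :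
    rootOperator K q hα * Algebra.lmul R K (monomial R K l) * rootOperator K q hα =
      algebraMap R (Module.End R K) q * Algebra.lmul R K (monomial R K (l - α)) := by
  have hs : monomialAut R M K (Module.reflection hα) (monomial R K l) = monomial R K (l - α) := by
    rw [monomialAut_monomial, Module.reflection_apply, hl, one_smul]
  rw [← hs]
  refine demazureLusztig_mul_lmul_mul q (monomialAut_reflection_mul_self hα)
    (monomialAut_reflection_root hα) (monomial_ne_zero α) (monomial_root_ne_one hα) ?_
  rw [hs, sub_eq_neg_add, monomial_add, monomial_neg]

theorem rootOperator_braid (hαβ : α' β = -1) (hβα : β' α = -1) :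
    rootOperator K q hα * rootOperator K q hβ * rootOperator K q hα =
      rootOperator K q hβ * rootOperator K q hα * rootOperator K q hβ := by
  have hne : α + β ≠ 0 := fun h => by simpa [hα, hαβ] using congr(α' $h)
  refine demazureLusztig_braid q (monomialAut_reflection_mul_self hα)
    (monomialAut_reflection_mul_self hβ) ?_ (monomialAut_reflection_root hα)
    (monomialAut_reflection_root hβ) ?_ ?_ (monomial_ne_zero α) (monomial_ne_zero β)
    (monomial_root_ne_one hα) (monomial_root_ne_one hβ) ?_
  · simp only [← map_mul, reflection_braid hα hβ hαβ hβα]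
  · rw [monomialAut_monomial, Module.reflection_apply, hαβ, neg_one_smul, sub_neg_eq_add, add_comm,
      monomial_add]
  · rw [monomialAut_monomial, Module.reflection_apply, hβα, neg_one_smul, sub_neg_eq_add,
      monomial_add]
  · rw [← monomial_add]
    exact monomial_ne_one hne

theorem rootOperator_monomial_of_eq_add_one {l : M} {n : ℕ} (hl : α' l = n + 1) :
    rootOperator K q hα (monomial R K l) =
      -(q • monomial R K (l - α' l • α)) -
        (q - 1) • ∑ k ∈ Finset.range n, monomial R K (l - ((k : ℤ) + 1) • α) := by
  have hs : monomialAut R M K (Module.reflection hα) (monomial R K l) =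
      monomial R K (l - α' l • α) := by
    rw [monomialAut_monomial, Module.reflection_apply]
  have hpow (k : ℕ) : monomial R K α ^ k * monomial R K (l - α' l • α) =
      monomial R K (l - α' l • α + k • α) := by
    rw [monomial_add, monomial_nsmul, mul_comm]
  have hl' : monomial R K l =
      monomial R K α ^ (n + 1) * monomialAut R M K (Module.reflection hα) (monomial R K l) := by
    rw [hs, hpow, hl]
    congr 1
    module
  have hsum : ∑ k ∈ Finset.range n, monomial R K (l - α' l • α + (k + 1) • α) =
      ∑ k ∈ Finset.range n, monomial R K (l - ((k : ℤ) + 1) • α) := by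
    rw [← Finset.sum_range_reflect]
    refine Finset.sum_congr rfl fun k hk => ?_
    obtain ⟨m, rfl⟩ := Nat.exists_eq_add_of_lt (Finset.mem_range.1 hk)
    rw [show k + m + 1 - 1 - k + 1 = m + 1 by omega, hl]
    congr 1
    push_cast
    module
  rw [rootOperator, demazureLusztig_of_eq_pow_mul q (monomial_root_ne_one hα) hl', hs]
  simp only [hpow, Finset.sum_range_succ', hsum, zero_smul, add_zero, Algebra.smul_def, map_sub,
    map_one]
  ring

theorem rootOperator_monomial_of_eq_neg {l : M} {n : ℕ} (hl : α' l = -n) :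
    rootOperator K q hα (monomial R K l) =
      -monomial R K (l - α' l • α) +
        (q - 1) • ∑ k ∈ Finset.range n, monomial R K (l + (k : ℤ) • α) := by
  have hs : monomialAut R M K (Module.reflection hα) (monomial R K l) =
      monomial R K (l - α' l • α) := by
    rw [monomialAut_monomial, Module.reflection_apply]
  rw [rootOperator, demazureLusztig_of_apply_eq_pow_mul q (monomial_root_ne_one hα) (n := n), hs]
  · simp only [monomial_add, natCast_zsmul, monomial_nsmul, mul_comm, Algebra.smul_def, map_sub,
      map_one]
  · rw [hs, hl, neg_smul, sub_neg_eq_add, natCast_zsmul, monomial_add, monomial_nsmul, mul_comm]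

end RootOperator

section WeightLattice

open scoped AddMonoidAlgebra

variable {R M K : Type*} [CommRing R] [AddCommGroup M] [Field K] [Algebra R[M] K] [Algebra R K]

variable (K) in
/-- The `B`-span of the monomials `q^(w l) X^l`, for a weight function `w` on the exponents. -/
noncomputable def weightLattice (B : Subring R) (q : Rˣ) (w : M → ℤ) : Submodule B K :=
  Submodule.span B (Set.range fun l => ((q ^ w l : Rˣ) : R) • monomial R K l)

variable {B : Subring R} {q : Rˣ} {w w' : M → ℤ}

theorem zpow_smul_monomial_mem (hq : (q : R) ∈ B) {l : M} {k : ℤ} (hk : w l ≤ k) :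
    ((q ^ k : Rˣ) : R) • monomial R K l ∈ weightLattice K B q w := by
  obtain ⟨n, rfl⟩ := Int.le.dest hk
  have hmem := Submodule.smul_mem (weightLattice K B q w) (⟨q, hq⟩ ^ n)
    (Submodule.subset_span ⟨l, rfl⟩)
  rwa [Subring.smul_def, smul_smul, SubmonoidClass.coe_pow, mul_comm, ← Units.val_pow_eq_pow_val,
    ← Units.val_mul, ← zpow_natCast, ← zpow_add] at hmem

theorem map_mem_weightLattice {F : Module.End R K}
    (hF : ∀ l, ((q ^ w l : Rˣ) : R) • F (monomial R K l) ∈ weightLattice K B q w') {f : K}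
    (hf : f ∈ weightLattice K B q w) : F f ∈ weightLattice K B q w' := by
  induction hf using Submodule.span_induction with
  | mem _ h =>
    obtain ⟨l, rfl⟩ := h
    simpa only [map_smul] using hF l
  | zero => simpa only [map_zero] using zero_mem _
  | add _ _ _ _ hx hy => simpa only [map_add] using add_mem hx hy
  | smul b _ _ hx => simpa only [Subring.smul_def, map_smul] using Submodule.smul_mem _ b hx

theorem monomial_mul_mem_weightLattice (hq : (q : R) ∈ B) {m : M} {k : ℤ}
    (h : ∀ l, w' (l + m) ≤ w l + k) {f : K} (hf : f ∈ weightLattice K B q w) :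
    ((q ^ k : Rˣ) : R) • (monomial R K m * f) ∈ weightLattice K B q w' := by
  refine map_mem_weightLattice (F := ((q ^ k : Rˣ) : R) • Algebra.lmul R K (monomial R K m))
    (fun l => ?_) hf
  rw [LinearMap.smul_apply, Algebra.coe_lmul_eq_mul, LinearMap.mul_apply_apply, smul_smul,
    ← Units.val_mul, ← zpow_add, ← monomial_add, add_comm m]
  exact zpow_smul_monomial_mem hq (h l)

variable [IsFractionRing R[M] K] [IsScalarTower R R[M] K]

theorem mem_span_of_algebraMap_mem_weightLattice {F : R[M]}
    (hF : algebraMap R[M] K F ∈ weightLattice K B q w) :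
    F ∈ Submodule.span B (Set.range fun l => AddMonoidAlgebra.single l ((q ^ w l : Rˣ) : R)) := by
  let φ : R[M] →ₗ[B] K := (IsScalarTower.toAlgHom R R[M] K).toLinearMap.restrictScalars B
  have hφ (l : M) : ((q ^ w l : Rˣ) : R) • monomial R K l =
      φ (AddMonoidAlgebra.single l ((q ^ w l : Rˣ) : R)) := by
    change _ = IsScalarTower.toAlgHom R R[M] K _
    rw [monomial, ← IsScalarTower.toAlgHom_apply R R[M] K, ← map_smul,
      AddMonoidAlgebra.smul_single, smul_eq_mul, mul_one]
  simp only [weightLattice, hφ, Set.range_comp' φ, ← Submodule.map_span] at hF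
  obtain ⟨F', hF', hFF'⟩ := hF
  exact IsFractionRing.injective R[M] K hFF' ▸ hF'

variable [Nontrivial R] {α : M} {α' : Module.Dual ℤ M}

theorem rootOperator_mem_weightLattice (hα : α' α = 2) (hq : (q : R) ∈ B)
    (h_refl : ∀ l, w' (l - α' l • α) ≤ w l + if 0 < α' l then 1 else 0)
    (h_sub : ∀ l k, 0 < k → k < α' l → w' (l - k • α) ≤ w l)
    (h_add : ∀ l k, 0 ≤ k → k < -α' l → w' (l + k • α) ≤ w l)
    {f : K} (hf : f ∈ weightLattice K B q w) :
    rootOperator K (q : R) hα f ∈ weightLattice K B q w' := by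
  have hsum {n : ℕ} {m : ℕ → M} {l : M} (h : ∀ k < n, w' (m k) ≤ w l) :
      ((q : R) - 1) • ∑ k ∈ Finset.range n, ((q ^ w l : Rˣ) : R) • monomial R K (m k) ∈
        weightLattice K B q w' :=
    Submodule.smul_mem _ (⟨q, hq⟩ - 1 : B) <| sum_mem fun k hk =>
      zpow_smul_monomial_mem hq (h k (Finset.mem_range.1 hk))
  refine map_mem_weightLattice (fun l => ?_) hf
  specialize h_refl l
  rcases le_or_gt (α' l) 0 with hl | hl
  · obtain ⟨n, hn⟩ := Int.exists_eq_neg_ofNat hl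
    rw [if_neg hl.not_gt, add_zero] at h_refl
    rw [rootOperator_monomial_of_eq_neg _ hα hn, smul_add, smul_neg, smul_comm, Finset.smul_sum]
    exact add_mem (neg_mem (zpow_smul_monomial_mem hq h_refl))
      (hsum fun k hk => h_add l k (by omega) (by omega))
  · obtain ⟨n, hn⟩ := Int.eq_succ_of_zero_lt hl
    rw [if_pos hl] at h_refl
    rw [rootOperator_monomial_of_eq_add_one _ hα hn, smul_sub, smul_neg, smul_smul, ← Units.val_mul,
      ← zpow_add_one, smul_comm, Finset.smul_sum]
    exact sub_mem (neg_mem (zpow_smul_monomial_mem hq h_refl))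
      (hsum fun k hk => h_sub l (k + 1) (by omega) (by omega))

end WeightLattice

section GeneralLinear

/-- The coroot `l ↦ l i - l j` of the general linear group. -/
def coroot {ι : Type*} (i j : ι) : Module.Dual ℤ (ι → ℤ) :=
  (LinearMap.proj i : (ι → ℤ) →ₗ[ℤ] ℤ) - LinearMap.proj j

theorem coroot_apply {ι : Type*} (i j : ι) (l : ι → ℤ) : coroot i j l = l i - l j :=
  rfl

variable {ι : Type*} [DecidableEq ι]

/-- The root `e_i - e_j` of the general linear group. -/
def root (i j : ι) : ι → ℤ :=
  Pi.single i 1 - Pi.single j 1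

theorem root_apply (i j k : ι) :
    root i j k = (if k = i then 1 else 0) - if k = j then 1 else 0 := by
  rw [root, Pi.sub_apply, Pi.single_apply, Pi.single_apply]

theorem coroot_root {i j : ι} (h : i ≠ j) : coroot i j (root i j) = 2 := by
  rw [coroot_apply, root_apply, root_apply, if_pos rfl, if_neg h, if_neg h.symm, if_pos rfl]
  rfl

open scoped AddMonoidAlgebra

variable {R : Type*} [CommRing R] (K : Type*) [Field K] {n : ℕ}
  [Algebra R[Fin (n + 1) → ℤ] K] [IsFractionRing R[Fin (n + 1) → ℤ] K]
  [Algebra R K] [IsScalarTower R R[Fin (n + 1) → ℤ] K]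

/-- The Demazure–Lusztig operator of the simple root `e_i - e_(i+1)`. -/
noncomputable def simpleRootOperator (q : R) (i : Fin n) : Module.End R K :=
  rootOperator K q (coroot_root (Fin.castSucc_lt_succ (i := i)).ne)

end GeneralLinear

section Spread

/-- The spread `max l - min l` of a weight `l` of `GL₃`. -/
def spread (l : Fin 3 → ℤ) : ℤ :=
  max (l 0) (max (l 1) (l 2)) - min (l 0) (min (l 1) (l 2))

open scoped AddMonoidAlgebra

variable {R K : Type*} [CommRing R] [Nontrivial R] [Field K] [Algebra R[Fin 3 → ℤ] K]
  [IsFractionRing R[Fin 3 → ℤ] K] [Algebra R K] [IsScalarTower R R[Fin 3 → ℤ] K]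
  {B : Subring R} {q : Rˣ}

theorem simpleRootOperator_mem_spread (hq : (q : R) ∈ B) (i : Fin 2) {f : K}
    (hf : f ∈ weightLattice K B q spread) :
    simpleRootOperator K (q : R) i f ∈ weightLattice K B q spread := by
  refine rootOperator_mem_weightLattice _ hq (fun l => ?_) (fun l k => ?_) (fun l k => ?_) hf <;>
    fin_cases i <;>
    simp only [spread, coroot_apply, root_apply, Pi.add_apply, Pi.sub_apply, Pi.smul_apply,
      smul_eq_mul, Fin.zero_eta, Fin.mk_one, Fin.castSucc_zero, Fin.castSucc_one,
      Fin.succ_zero_eq_one, Fin.succ_one_eq_two, Fin.reduceEq, reduceIte] <;>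
    omega

-- Multiplication by `X^(e₀)` shifts the weight function by `e₀`; each of the two operators then
-- undoes part of the shift, and the three steps together gain the factor `q⁻¹`.
theorem rotation_mem_spread (hq : (q : R) ∈ B) {f : K}
    (hf : f ∈ weightLattice K B q spread) :
    ((q⁻¹ : Rˣ) : R) • simpleRootOperator K (q : R) (1 : Fin 2)
      (simpleRootOperator K (q : R) (0 : Fin 2)
        (monomial R K (Pi.single 0 1 : Fin 3 → ℤ) * f)) ∈ weightLattice K B q spread := by
  rw [← map_smul, ← map_smul, ← zpow_neg_one]
  have h₁ := monomial_mul_mem_weightLattice (m := Pi.single 0 1) (k := -1)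
    (w' := fun l => spread (l - Pi.single 0 1) - 1) hq
    (fun l => (congrArg (fun m => spread m - 1) (add_sub_cancel_right l _)).le) hf
  have h₂ : simpleRootOperator K (q : R) (0 : Fin 2) (((q ^ (-1 : ℤ) : Rˣ) : R) •
      (monomial R K (Pi.single 0 1 : Fin 3 → ℤ) * f)) ∈
      weightLattice K B q fun l => if l 2 < l 1 then spread l - 1 else spread l := by
    refine rootOperator_mem_weightLattice _ hq (fun l => ?_) (fun l k => ?_) (fun l k => ?_) h₁
    all_goals
      simp only [spread, coroot_apply, root_apply, Pi.add_apply, Pi.sub_apply, Pi.smul_apply,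
        smul_eq_mul, Pi.single_apply, Fin.castSucc_zero, Fin.succ_zero_eq_one, Fin.reduceEq,
        reduceIte]
      omega
  refine rootOperator_mem_weightLattice _ hq (fun l => ?_) (fun l k => ?_) (fun l k => ?_) h₂
  all_goals
    simp only [spread, coroot_apply, root_apply, Pi.add_apply, Pi.sub_apply, Pi.smul_apply,
      smul_eq_mul, Fin.castSucc_one, Fin.succ_one_eq_two, Fin.reduceEq, reduceIte]
    omega

end Spread

section ZPowersPi

open Multiplicative (ofAdd)

variable {ι : Type*} [DecidableEq ι]

theorem monoidHom_ext_single [Finite ι] {N : Type*} [Monoid N] {φ ψ : Multiplicative (ι → ℤ) →* N}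
    (h : ∀ i, φ (ofAdd (Pi.single i 1)) = ψ (ofAdd (Pi.single i 1))) : φ = ψ := by
  have h_single (i : ι) :
      φ.comp (AddMonoidHom.toMultiplicative (AddMonoidHom.single (fun _ => ℤ) i)) =
        ψ.comp (AddMonoidHom.toMultiplicative (AddMonoidHom.single (fun _ => ℤ) i)) :=
    MonoidHom.ext_mint (h i)
  have h_all (l : ι → ℤ) : φ (ofAdd l) = ψ (ofAdd l) := by
    induction l using Pi.single_induction with
    | zero => exact (map_one φ).trans (map_one ψ).symm
    | add l m hl hm => rw [ofAdd_add, map_mul, map_mul, hl, hm]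
    | single i n => exact DFunLike.congr_fun (h_single i) (ofAdd n)
  exact MonoidHom.ext fun l => h_all l.toAdd

variable {G : Type*} [Group G] [Fintype ι] (y : ι → G) (hy : ∀ i j, Commute (y i) (y j))

/-- The homomorphism `l ↦ ∏ y i ^ l i` attached to a finite family of commuting elements. -/
def zpowersPi : Multiplicative (ι → ℤ) →* G :=
  (MonoidHom.noncommPiCoprod (fun i => zpowersHom G (y i))
    fun i j _ m n => (hy i j).zpow_zpow m.toAdd n.toAdd).comp
      (MulEquiv.piMultiplicative fun _ => ℤ).toMonoidHom

theorem zpowersPi_single (i : ι) : zpowersPi y hy (ofAdd (Pi.single i 1)) = y i :=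
  (MonoidHom.noncommPiCoprod_mulSingle (hcomm := fun i j _ m n =>
    (hy i j).zpow_zpow m.toAdd n.toAdd) (fun i => zpowersHom G (y i)) i (ofAdd (1 : ℤ))).trans
      (zpow_one (y i))

theorem zpowersPi_one {G : Type*} [Group G] (y : Fin 3 → G) (hy : ∀ i j, Commute (y i) (y j)) :
    zpowersPi y hy (ofAdd 1) = y 0 * y 1 * y 2 := by
  have h_one : (1 : Fin 3 → ℤ) = Pi.single 0 1 + Pi.single 1 1 + Pi.single 2 1 := by decide
  rw [h_one, ofAdd_add, ofAdd_add, map_mul, map_mul, zpowersPi_single, zpowersPi_single,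
    zpowersPi_single]

end ZPowersPi

section NormalizedMonomial

open scoped AddMonoidAlgebra

theorem spread_eq_sub {l : Fin 3 → ℤ} {i j : Fin 3} (hi : ∀ k, l i ≤ l k) (hj : ∀ k, l k ≤ l j) :
    spread l = l j - l i := by
  have hmax : max (l 0) (max (l 1) (l 2)) = l j :=
    le_antisymm (max_le (hj 0) (max_le (hj 1) (hj 2))) <| by fin_cases j <;> simp
  have hmin : min (l 0) (min (l 1) (l 2)) = l i :=
    le_antisymm (by fin_cases i <;> simp) (le_min (hi 0) (le_min (hi 1) (hi 2)))
  rw [spread, hmax, hmin]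

theorem exists_eq_smul_single_add_smul (l : Fin 3 → ℤ) : ∃ (i j : Fin 3) (m n : ℕ) (b : ℤ),
    l = n • Pi.single j 1 + m • -Pi.single i 1 + b • 1 ∧ spread l = n + m := by
  let σ := Tuple.sort l
  have hσ : Monotone (l ∘ σ) := Tuple.monotone_sort l
  obtain ⟨m, hm⟩ := Int.le.dest (hσ (show (0 : Fin 3) ≤ 1 by decide))
  obtain ⟨n, hn⟩ := Int.le.dest (hσ (show (1 : Fin 3) ≤ 2 by decide))
  simp only [Function.comp_apply] at hm hn
  refine ⟨σ 0, σ 2, m, n, l (σ 1), funext fun k => ?_, ?_⟩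
  · obtain ⟨j, rfl⟩ := σ.surjective k
    simp only [← natCast_zsmul, Pi.add_apply, Pi.smul_apply, Pi.neg_apply, Pi.single_apply,
      σ.injective.eq_iff, Pi.one_apply, smul_eq_mul]
    fin_cases j <;>
      simp only [Fin.zero_eta, Fin.mk_one, Fin.reduceFinMk, Fin.reduceEq, reduceIte] <;> omega
  · rw [spread_eq_sub (i := σ 0) (j := σ 2)]
    · omega
    · exact fun k => by simpa using hσ (Fin.zero_le (σ.symm k))
    · exact fun k => by simpa using hσ (Fin.le_last (σ.symm k))

variable {R : Type*} [CommRing R] (q : Rˣ)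

/-- The monomial `X^l` scaled by `q` to the power of the spread of `l`. -/
noncomputable def normalizedMonomial (l : Fin 3 → ℤ) : R[Fin 3 → ℤ] :=
  AddMonoidAlgebra.single l ((q ^ spread l : Rˣ) : R)

theorem normalizedMonomial_mem {C : Submonoid R[Fin 3 → ℤ]} (h_one : normalizedMonomial q 1 ∈ C)
    (h_neg_one : normalizedMonomial q (-1) ∈ C)
    (h_single : ∀ i, normalizedMonomial q (Pi.single i 1) ∈ C)
    (h_neg_single : ∀ i, normalizedMonomial q (-Pi.single i 1) ∈ C) (l : Fin 3 → ℤ) :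
    normalizedMonomial q l ∈ C := by
  have h_const (b : ℤ) : AddMonoidAlgebra.single (b • 1 : Fin 3 → ℤ) (1 : R) ∈ C := by
    obtain ⟨n, rfl | rfl⟩ := b.eq_nat_or_neg
    · simpa [normalizedMonomial, spread, AddMonoidAlgebra.single_pow] using pow_mem h_one n
    · simpa [normalizedMonomial, spread, AddMonoidAlgebra.single_pow] using pow_mem h_neg_one n
  have h_spread : ∀ i : Fin 3, spread (Pi.single i 1) = 1 ∧ spread (-Pi.single i 1) = 1 := by
    decide
  obtain ⟨i, j, m, n, b, hl, hs⟩ := exists_eq_smul_single_add_smul l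
  have hmem := mul_mem (mul_mem (pow_mem (h_single j) n) (pow_mem (h_neg_single i) m)) (h_const b)
  rwa [normalizedMonomial, normalizedMonomial, (h_spread j).1, (h_spread i).2, zpow_one,
    AddMonoidAlgebra.single_pow, AddMonoidAlgebra.single_pow, AddMonoidAlgebra.single_mul_single,
    AddMonoidAlgebra.single_mul_single, ← hl, mul_one, ← pow_add, ← Units.val_pow_eq_pow_val,
    ← zpow_natCast, Nat.cast_add, ← hs] at hmem

end NormalizedMonomial

section LaurentEval

open scoped AddMonoidAlgebra
open Multiplicative (ofAdd)

variable {ι R E : Type*} [Fintype ι] [CommRing R] [Ring E] [Algebra R E]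
  (y : ι → Eˣ) (hy : ∀ i j, Commute (y i) (y j))

/-- The evaluation of Laurent polynomials at a family of commuting units. -/
noncomputable def laurentEval : R[ι → ℤ] →ₐ[R] E :=
  AddMonoidAlgebra.lift R E (ι → ℤ) ((Units.coeHom E).comp (zpowersPi y hy))

theorem laurentEval_single (l : ι → ℤ) (c : R) :
    laurentEval y hy (AddMonoidAlgebra.single l c) =
      algebraMap R E c * (zpowersPi y hy (ofAdd l) : Eˣ) := by
  rw [laurentEval, AddMonoidAlgebra.lift_single, Algebra.smul_def]
  rfl

theorem laurentEval_single_single [DecidableEq ι] (i : ι) :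
    laurentEval (R := R) y hy (AddMonoidAlgebra.single (Pi.single i 1) 1) = y i := by
  rw [laurentEval_single, zpowersPi_single, map_one, one_mul]

theorem laurentEval_single_neg_single [DecidableEq ι] (i : ι) :
    laurentEval (R := R) y hy (AddMonoidAlgebra.single (-Pi.single i 1) 1) =
      ((y i)⁻¹ : Eˣ) := by
  rw [laurentEval_single, ofAdd_neg, map_inv, zpowersPi_single, map_one, one_mul]

theorem adjoin_units_le_laurentEval_range :
    Algebra.adjoin R (Set.range (fun i => (y i : E)) ∪ Set.range fun i => ((y i)⁻¹ : Eˣ).val) ≤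
      (laurentEval (R := R) y hy).range := by
  classical
  refine Algebra.adjoin_le (Set.union_subset ?_ ?_) <;> rintro _ ⟨i, rfl⟩
  · exact ⟨_, laurentEval_single_single y hy i⟩
  · exact ⟨_, laurentEval_single_neg_single y hy i⟩

end LaurentEval

section SpreadGenerators

open scoped AddMonoidAlgebra
open Multiplicative (ofAdd)

/-- The elements `y₀ y₁ y₂`, `Q yᵢ yⱼ` and `Q yᵢ` together with the analogous products of the
inverses `uᵢ` of the `yᵢ`. -/
def spreadGenerators {E : Type*} [Monoid E] (y u : Fin 3 → E) (Q : E) : Set E :=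
  {y 0 * y 1 * y 2, u 2 * u 1 * u 0} ∪
    {x | ∃ i j : Fin 3, i ≠ j ∧ (x = Q * (y i * y j) ∨ x = Q * (u j * u i))} ∪
    {x | ∃ i : Fin 3, x = Q * y i ∨ x = Q * u i}

theorem spreadGenerators_subset {E : Type*} [Monoid E] {N : Submonoid E} {y u : Fin 3 → E} {Q : E}
    (hy : ∀ i, y i ∈ N) (hu : ∀ i, u i ∈ N) (hQ : Q ∈ N) : spreadGenerators y u Q ⊆ N := by
  rintro _ (((rfl | rfl) | ⟨i, j, -, rfl | rfl⟩) | ⟨i, rfl | rfl⟩)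
  · exact mul_mem (mul_mem (hy 0) (hy 1)) (hy 2)
  · exact mul_mem (mul_mem (hu 2) (hu 1)) (hu 0)
  · exact mul_mem hQ (mul_mem (hy i) (hy j))
  · exact mul_mem hQ (mul_mem (hu j) (hu i))
  · exact mul_mem hQ (hy i)
  · exact mul_mem hQ (hu i)

variable {R E : Type*} [CommRing R] [Ring E] [Algebra R E] (q : Rˣ)
  (y : Fin 3 → Eˣ) (hy : ∀ i j, Commute (y i) (y j))

theorem laurentEval_normalizedMonomial (l : Fin 3 → ℤ) :
    laurentEval y hy (normalizedMonomial q l) =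
      algebraMap R E ((q ^ spread l : Rˣ) : R) * (zpowersPi y hy (ofAdd l) : Eˣ) :=
  laurentEval_single y hy l _

theorem laurentEval_normalizedMonomial_one :
    laurentEval y hy (normalizedMonomial q 1) = (y 0 * y 1 * y 2 : E) := by
  have h_spread : spread 1 = 0 := by decide
  rw [laurentEval_normalizedMonomial, zpowersPi_one, h_spread, zpow_zero, Units.val_one, map_one,
    one_mul, Units.val_mul, Units.val_mul]

theorem laurentEval_normalizedMonomial_neg_one :
    laurentEval y hy (normalizedMonomial q (-1)) =
      (((y 2)⁻¹ : Eˣ) * ((y 1)⁻¹ : Eˣ) * ((y 0)⁻¹ : Eˣ) : E) := by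
  have h_spread : spread (-1) = 0 := by decide
  rw [laurentEval_normalizedMonomial, ofAdd_neg, map_inv, zpowersPi_one, mul_inv_rev, mul_inv_rev,
    h_spread, zpow_zero, Units.val_one, map_one, one_mul, Units.val_mul, Units.val_mul, mul_assoc]

theorem laurentEval_normalizedMonomial_single (i : Fin 3) :
    laurentEval y hy (normalizedMonomial q (Pi.single i 1)) = algebraMap R E q * (y i : E) := by
  have h_spread : ∀ i : Fin 3, spread (Pi.single i 1) = 1 := by decide
  rw [laurentEval_normalizedMonomial, zpowersPi_single, h_spread, zpow_one]

theorem laurentEval_normalizedMonomial_neg_single (i : Fin 3) :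
    laurentEval y hy (normalizedMonomial q (-Pi.single i 1)) =
      algebraMap R E q * ((y i)⁻¹ : Eˣ) := by
  have h_spread : ∀ i : Fin 3, spread (-Pi.single i 1) = 1 := by decide
  rw [laurentEval_normalizedMonomial, ofAdd_neg, map_inv, zpowersPi_single, h_spread, zpow_one]

theorem laurentEval_normalizedMonomial_add {i j : Fin 3} (hij : i ≠ j) :
    laurentEval y hy (normalizedMonomial q (Pi.single i 1 + Pi.single j 1)) =
      algebraMap R E q * (y i * y j : E) := by
  have h_spread : ∀ i j : Fin 3, i ≠ j → spread (Pi.single i 1 + Pi.single j 1) = 1 := by decide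
  rw [laurentEval_normalizedMonomial, ofAdd_add, map_mul, zpowersPi_single, zpowersPi_single,
    h_spread i j hij, zpow_one, Units.val_mul]

theorem laurentEval_normalizedMonomial_neg_add {i j : Fin 3} (hij : i ≠ j) :
    laurentEval y hy (normalizedMonomial q (-(Pi.single i 1 + Pi.single j 1))) =
      algebraMap R E q * (((y j)⁻¹ : Eˣ) * ((y i)⁻¹ : Eˣ) : E) := by
  have h_spread : ∀ i j : Fin 3, i ≠ j → spread (-(Pi.single i 1 + Pi.single j 1)) = 1 := by
    decide
  rw [laurentEval_normalizedMonomial, ofAdd_neg, map_inv, ofAdd_add, map_mul, zpowersPi_single,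
    zpowersPi_single, h_spread i j hij, zpow_one, mul_inv_rev, Units.val_mul]

theorem spreadGenerators_subset_range_laurentEval :
    spreadGenerators (fun i => (y i : E)) (fun i => ((y i)⁻¹ : Eˣ)) (algebraMap R E q) ⊆
      Set.range fun l => laurentEval y hy (normalizedMonomial q l) := by
  rintro _ (((rfl | rfl) | ⟨i, j, hij, rfl | rfl⟩) | ⟨i, rfl | rfl⟩)
  · exact ⟨_, laurentEval_normalizedMonomial_one q y hy⟩
  · exact ⟨_, laurentEval_normalizedMonomial_neg_one q y hy⟩
  · exact ⟨_, laurentEval_normalizedMonomial_add q y hy hij⟩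
  · exact ⟨_, laurentEval_normalizedMonomial_neg_add q y hy hij⟩
  · exact ⟨_, laurentEval_normalizedMonomial_single q y hy i⟩
  · exact ⟨_, laurentEval_normalizedMonomial_neg_single q y hy i⟩

theorem laurentEval_normalizedMonomial_mem {C : Submonoid E}
    (h_prod : (y 0 * y 1 * y 2 : E) ∈ C)
    (h_prod_inv : (((y 2)⁻¹ : Eˣ) * ((y 1)⁻¹ : Eˣ) * ((y 0)⁻¹ : Eˣ) : E) ∈ C)
    (h_mul : ∀ i, algebraMap R E q * (y i : E) ∈ C)
    (h_mul_inv : ∀ i, algebraMap R E q * ((y i)⁻¹ : Eˣ) ∈ C) (l : Fin 3 → ℤ) :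
    laurentEval y hy (normalizedMonomial q l) ∈ C := by
  refine normalizedMonomial_mem (C := C.comap (laurentEval y hy)) q ?_ ?_ (fun i => ?_)
    (fun i => ?_) l <;> rw [Submonoid.mem_comap]
  · rwa [laurentEval_normalizedMonomial_one]
  · rwa [laurentEval_normalizedMonomial_neg_one]
  · rw [laurentEval_normalizedMonomial_single]
    exact h_mul i
  · rw [laurentEval_normalizedMonomial_neg_single]
    exact h_mul_inv i

theorem laurentEval_mem_closure_spreadGenerators (B : Subring R) {F : R[Fin 3 → ℤ]}
    (hF : F ∈ Submodule.span B (Set.range (normalizedMonomial q))) :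
    laurentEval y hy F ∈ Subring.closure
      (spreadGenerators (fun i => (y i : E)) (fun i => ((y i)⁻¹ : Eˣ)) (algebraMap R E q) ∪
        algebraMap R E '' B) := by
  set C := Subring.closure
    (spreadGenerators (fun i => (y i : E)) (fun i => ((y i)⁻¹ : Eˣ)) (algebraMap R E q) ∪
      algebraMap R E '' B)
  have h_gen {x : E} (hx : x ∈ spreadGenerators (fun i => (y i : E)) (fun i => ((y i)⁻¹ : Eˣ))
      (algebraMap R E q)) : x ∈ C.toSubmonoid := Subring.subset_closure (.inl hx)
  induction hF using Submodule.span_induction with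
  | mem _ h =>
    obtain ⟨l, rfl⟩ := h
    exact laurentEval_normalizedMonomial_mem q y hy (h_gen (.inl (.inl (.inl rfl))))
      (h_gen (.inl (.inl (.inr rfl)))) (fun i => h_gen (.inr ⟨i, .inl rfl⟩))
      (fun i => h_gen (.inr ⟨i, .inr rfl⟩)) l
  | zero => simpa only [map_zero] using zero_mem C
  | add _ _ _ _ hx hy => simpa only [map_add] using add_mem hx hy
  | smul b _ _ hx =>
    rw [Subring.smul_def, map_smul, Algebra.smul_def]
    exact mul_mem (Subring.subset_closure (.inr ⟨b, b.2, rfl⟩)) hx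

end SpreadGenerators

section UnitOfQuad

variable {R E : Type*} [CommRing R] [Ring E] [Algebra R E]

variable (E) in
/-- The image of a unit `q` of the base ring. -/
def scalarUnit (q : Rˣ) : Eˣ :=
  Units.map (algebraMap R E : R →* E) q

/-- A root `S` of `(S + 1) (S - q)`, as a unit with inverse `q⁻¹ (S - q + 1)`. -/
def unitOfQuad (q : Rˣ) (S : E) (h : (S + 1) * (S - algebraMap R E q) = 0) : Eˣ where
  val := S
  inv := algebraMap R E (q⁻¹ : Rˣ) * (S - algebraMap R E q + 1)
  val_inv := by
    have hS : S * (S - algebraMap R E q + 1) = algebraMap R E q := by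
      rw [← sub_eq_zero, ← h]; noncomm_ring
    rw [← mul_assoc, ← Algebra.commutes, mul_assoc, hS, ← map_mul, Units.inv_mul, map_one]
  inv_val := by
    have hS : (S - algebraMap R E q + 1) * S = algebraMap R E q := by
      rw [← sub_eq_zero, ← h, add_mul S, mul_sub S, ← Algebra.commutes]; noncomm_ring
    rw [mul_assoc, hS, ← map_mul, Units.inv_mul, map_one]

variable (q : Rˣ) (S : E) (h : (S + 1) * (S - algebraMap R E q) = 0)

theorem algebraMap_mul_inv_unitOfQuad :
    algebraMap R E q * ((unitOfQuad q S h)⁻¹ : Eˣ) = S - algebraMap R E q + 1 := by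
  change _ * (_ * _) = _
  rw [← mul_assoc, ← map_mul, Units.mul_inv, map_one, one_mul]

theorem commute_scalarUnit (g : Eˣ) : Commute (scalarUnit E q) g :=
  Units.ext (Algebra.commutes (q : R) (g : E))

end UnitOfQuad

section Presentation

variable {R : Type} [CommRing R] {q : R}

theorem S2_eq : S2 R q = Tinv R q * S1 R q * T R q := by
  rw [mul_assoc, ← T_mul_S2, ← mul_assoc, Tinv_mul_T, one_mul]

theorem quad_rel_S2 : (S2 R q + 1) * (S2 R q - algebraMap R (HeckeAlg R q) q) = 0 := by
  have h_add : S2 R q + 1 = Tinv R q * (S1 R q + 1) * T R q := by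
    rw [mul_add, add_mul, mul_one, Tinv_mul_T, ← S2_eq]
  have h_sub : T R q * (S2 R q - algebraMap R (HeckeAlg R q) q) =
      (S1 R q - algebraMap R (HeckeAlg R q) q) * T R q := by
    rw [mul_sub, sub_mul, T_mul_S2, Algebra.commutes]
  rw [h_add, mul_assoc, h_sub, mul_assoc, ← mul_assoc (S1 R q + 1), quad_rel, zero_mul, mul_zero]

theorem adjoin_range_gen : Algebra.adjoin R (Set.range (gen R q)) = ⊤ := by
  have hgen : Set.range (gen R q) =
      RingQuot.mkAlgHom R (HeckeRel R q) '' Set.range (FreeAlgebra.ι R) :=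
    Set.range_comp _ _
  rw [hgen, ← AlgHom.map_adjoin, FreeAlgebra.adjoin_range_ι, Algebra.map_top,
    AlgHom.range_eq_top]
  exact RingQuot.mkAlgHom_surjective R _

variable {E : Type*} [Ring E] [Algebra R E]

/-- The homomorphism from the affine Hecke algebra determined by images of `T`, `S₁`, `S₂`
satisfying the defining relations. -/
noncomputable def lift (t : Eˣ) (s₁ s₂ : E) (h_quad : (s₁ + 1) * (s₁ - algebraMap R E q) = 0)
    (h_cube : (t : E) ^ 3 * s₁ = s₁ * (t : E) ^ 3) (h_braid : s₁ * s₂ * s₁ = s₂ * s₁ * s₂)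
    (h_conj : (t : E) * s₂ = s₁ * t) : HeckeAlg R q →ₐ[R] E :=
  RingQuot.liftAlgHom R ⟨FreeAlgebra.lift R ![t, (t⁻¹ : Eˣ), s₁, s₂], fun _ _ h => by
    cases h <;>
      simp only [map_mul, map_add, map_sub, map_pow, map_one, map_zero, AlgHom.commutes,
        FreeAlgebra.lift_ι_apply, Matrix.cons_val]
    · exact t.mul_inv
    · exact t.inv_mul
    all_goals assumption⟩

theorem lift_gen (t : Eˣ) (s₁ s₂ : E) (h_quad : (s₁ + 1) * (s₁ - algebraMap R E q) = 0)
    (h_cube : (t : E) ^ 3 * s₁ = s₁ * (t : E) ^ 3) (h_braid : s₁ * s₂ * s₁ = s₂ * s₁ * s₂)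
    (h_conj : (t : E) * s₂ = s₁ * t) (i : Fin 4) :
    lift t s₁ s₂ h_quad h_cube h_braid h_conj (gen R q i) =
      ![(t : E), (t⁻¹ : Eˣ), s₁, s₂] i := by
  rw [lift, gen, RingQuot.liftAlgHom_mkAlgHom_apply, FreeAlgebra.lift_ι_apply]

end Presentation

section BernsteinUnit

variable {R : Type} [CommRing R] (q : Rˣ)

variable (R) in
/-- The generator `T`, as a unit. -/
noncomputable def TUnit (q : R) : (HeckeAlg R q)ˣ :=
  ⟨T R q, Tinv R q, T_mul_Tinv R q, Tinv_mul_T R q⟩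

/-- The generator `S₁`, as a unit when `q` is one. -/
noncomputable def S1Unit : (HeckeAlg R (q : R))ˣ :=
  unitOfQuad q (S1 R q) (quad_rel R q)

/-- The generator `S₂`, as a unit when `q` is one. -/
noncomputable def S2Unit : (HeckeAlg R (q : R))ˣ :=
  unitOfQuad q (S2 R q) quad_rel_S2

/-- The Bernstein elements, as units. -/
noncomputable def bernsteinUnit : Fin 3 → (HeckeAlg R (q : R))ˣ :=
  bernsteinWord (scalarUnit (HeckeAlg R (q : R)) q) (TUnit R q) (S1Unit q) (S2Unit q)

theorem bernsteinUnit_val (i : Fin 3) :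
    (bernsteinUnit q i : HeckeAlg R (q : R)) = Y R q (q⁻¹ : Rˣ) i := by
  fin_cases i <;> rfl

theorem units_braid : S1Unit q * S2Unit q * S1Unit q = S2Unit q * S1Unit q * S2Unit q :=
  Units.ext (braid_rel R (q : R))

theorem commute_TUnit_cube : Commute (TUnit R (q : R) ^ 3) (S1Unit q) :=
  Units.ext (T3_mul_S1 R (q : R))

theorem TUnit_mul_S2Unit : TUnit R (q : R) * S2Unit q = S1Unit q * TUnit R q :=
  Units.ext (T_mul_S2 R (q : R))

theorem bernsteinUnit_commute (i j : Fin 3) : Commute (bernsteinUnit q i) (bernsteinUnit q j) :=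
  bernsteinWord_commute (commute_scalarUnit q) (units_braid q) (commute_TUnit_cube q)
    (TUnit_mul_S2Unit q) i j

theorem bernsteinUnit_prod :
    bernsteinUnit q 0 * bernsteinUnit q 1 * bernsteinUnit q 2 = TUnit R (q : R) ^ 3 :=
  (mul_assoc _ _ _).trans <| bernsteinWord_prod (commute_scalarUnit q) (units_braid q)
    (commute_TUnit_cube q) (TUnit_mul_S2Unit q)

end BernsteinUnit

section SimpleRootUnit

open scoped AddMonoidAlgebra
open Multiplicative (ofAdd)

section MonomialUnit

variable (R M K : Type*) [CommRing R] [AddCommGroup M] [Field K] [Algebra R[M] K] [Algebra R K]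

/-- Multiplication by `X^l`, as a unit of the endomorphism ring. -/
noncomputable def monomialUnit : Multiplicative M →* (Module.End R K)ˣ :=
  (((Algebra.lmul R K : K →* Module.End R K).comp (algebraMap R[M] K : R[M] →* K)).comp
    (AddMonoidAlgebra.of R M)).toHomUnits

end MonomialUnit

variable {R : Type*} [CommRing R] [Nontrivial R] (K : Type*) [Field K] {n : ℕ}
  [Algebra R[Fin (n + 1) → ℤ] K] [IsFractionRing R[Fin (n + 1) → ℤ] K]
  [Algebra R K] [IsScalarTower R R[Fin (n + 1) → ℤ] K] (q : Rˣ)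

theorem simpleRootOperator_quad (q : R) (i : Fin n) :
    (simpleRootOperator K q i + 1) *
      (simpleRootOperator K q i - algebraMap R (Module.End R K) q) = 0 :=
  rootOperator_quad q _

/-- The Demazure–Lusztig operator of a simple root, as a unit. -/
noncomputable def simpleRootUnit (i : Fin n) : (Module.End R K)ˣ :=
  unitOfQuad q (simpleRootOperator K (q : R) i) (simpleRootOperator_quad K (q : R) i)

theorem simpleRootUnit_mul_mul (i : Fin n) :
    simpleRootUnit K q i * monomialUnit R (Fin (n + 1) → ℤ) K (ofAdd (Pi.single i.castSucc 1)) *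
        simpleRootUnit K q i =
      scalarUnit (Module.End R K) q *
        monomialUnit R (Fin (n + 1) → ℤ) K (ofAdd (Pi.single i.succ 1)) := by
  have hne : i.castSucc ≠ i.succ := Fin.castSucc_lt_succ.ne
  have hl : coroot i.castSucc i.succ (Pi.single i.castSucc 1) = 1 := by
    rw [coroot_apply, Pi.single_eq_same, Pi.single_eq_of_ne hne.symm, sub_zero]
  have hsub : Pi.single i.castSucc 1 - root i.castSucc i.succ = Pi.single i.succ 1 :=
    sub_sub_cancel _ _
  have hmul := rootOperator_mul_lmul_mul (K := K) (q : R) (coroot_root hne) hl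
  rw [hsub] at hmul
  exact Units.ext hmul

theorem commute_simpleRootUnit_monomialUnit (i : Fin n) {l : Fin (n + 1) → ℤ}
    (hl : l i.castSucc = l i.succ) :
    Commute (simpleRootUnit K q i) (monomialUnit R _ K (ofAdd l)) :=
  Units.ext (rootOperator_commute_lmul (q : R) _ (sub_eq_zero.2 hl)).eq

theorem simpleRootUnit_braid {i j : Fin n} (hij : i.succ = j.castSucc) :
    simpleRootUnit K q i * simpleRootUnit K q j * simpleRootUnit K q i =
      simpleRootUnit K q j * simpleRootUnit K q i * simpleRootUnit K q j := by
  refine Units.ext (rootOperator_braid (q : R) _ _ ?_ ?_) <;>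
    simp only [coroot_apply, root_apply, Fin.ext_iff, Fin.val_castSucc, Fin.val_succ] at hij ⊢ <;>
    split_ifs <;> omega

end SimpleRootUnit

section PolynomialRepresentation

open scoped AddMonoidAlgebra
open Multiplicative (ofAdd)

variable {R : Type} [CommRing R] [Nontrivial R] (K : Type*) [Field K] [Algebra R[Fin 3 → ℤ] K]
  [IsFractionRing R[Fin 3 → ℤ] K] [Algebra R K] [IsScalarTower R R[Fin 3 → ℤ] K] (q : Rˣ)

/-- The operator by which `T` acts in the polynomial representation. -/
noncomputable def rotationUnit : (Module.End R K)ˣ :=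
  (scalarUnit (Module.End R K) q)⁻¹ *
    simpleRootUnit K q (1 : Fin 2) * simpleRootUnit K q (0 : Fin 2) *
      monomialUnit R (Fin 3 → ℤ) K (ofAdd (Pi.single 0 1))

theorem rotationUnit_mul :
    rotationUnit K q * simpleRootUnit K q (1 : Fin 2) =
      simpleRootUnit K q (0 : Fin 2) * rotationUnit K q :=
  rotation_mul_eq (commute_scalarUnit q) (simpleRootUnit_braid K q rfl)
    (commute_simpleRootUnit_monomialUnit K q 1 rfl)

theorem bernsteinWord_rotationUnit (i : Fin 3) :
    bernsteinWord (scalarUnit (Module.End R K) q)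
      (rotationUnit K q) (simpleRootUnit K q (0 : Fin 2)) (simpleRootUnit K q (1 : Fin 2)) i =
        monomialUnit R (Fin 3 → ℤ) K (ofAdd (Pi.single i 1)) := by
  refine (congrFun (bernsteinWord_rotation (commute_scalarUnit q)
    (y := monomialUnit R (Fin 3 → ℤ) K (ofAdd (Pi.single 1 1)))
    (simpleRootUnit_mul_mul K q 0) (simpleRootUnit_mul_mul K q 1)) i).trans ?_
  fin_cases i <;> rfl

theorem rotationUnit_cube : rotationUnit K q ^ 3 = monomialUnit R (Fin 3 → ℤ) K (ofAdd 1) := by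
  have h_one : (1 : Fin 3 → ℤ) = Pi.single 2 1 + (Pi.single 1 1 + Pi.single 0 1) := by decide
  rw [h_one, ofAdd_add, ofAdd_add, map_mul, map_mul]
  exact rotation_cube (commute_scalarUnit q) (simpleRootUnit_braid K q rfl)
    (simpleRootUnit_mul_mul K q 0) (simpleRootUnit_mul_mul K q 1)
    (commute_simpleRootUnit_monomialUnit K q 1 rfl)

theorem commute_rotationUnit_cube :
    Commute (rotationUnit K q ^ 3) (simpleRootUnit K q (0 : Fin 2)) :=
  rotationUnit_cube K q ▸ (commute_simpleRootUnit_monomialUnit K q 0 rfl).symm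

/-- The polynomial representation of the affine Hecke algebra, on the fraction field of the group
algebra of `ℤ³`. -/
noncomputable def polyRep : HeckeAlg R (q : R) →ₐ[R] Module.End R K :=
  lift (rotationUnit K q) (simpleRootOperator K (q : R) (0 : Fin 2))
    (simpleRootOperator K (q : R) (1 : Fin 2)) (simpleRootOperator_quad K (q : R) (0 : Fin 2))
    congr(Units.val $((commute_rotationUnit_cube K q).eq))
    congr(Units.val $(simpleRootUnit_braid K q (i := (0 : Fin 2)) rfl))
    congr(Units.val $(rotationUnit_mul K q))

theorem polyRep_gen (i : Fin 4) :
    polyRep K q (gen R q i) =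
      ![(rotationUnit K q : Module.End R K), ((rotationUnit K q)⁻¹ : (Module.End R K)ˣ),
        simpleRootOperator K (q : R) (0 : Fin 2), simpleRootOperator K (q : R) (1 : Fin 2)] i :=
  lift_gen _ _ _ _ _ _ _ i

theorem polyRep_bernsteinUnit (i : Fin 3) :
    Units.map (polyRep K q : HeckeAlg R (q : R) →* Module.End R K) (bernsteinUnit q i) =
      monomialUnit R (Fin 3 → ℤ) K (ofAdd (Pi.single i 1)) := by
  rw [← bernsteinWord_rotationUnit K q, bernsteinUnit, map_bernsteinWord]
  congr 1
  · exact Units.ext ((polyRep K q).commutes _)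
  · exact Units.ext (polyRep_gen K q 0)
  · exact Units.ext (polyRep_gen K q 2)
  · exact Units.ext (polyRep_gen K q 3)

theorem polyRep_laurentEval (F : R[Fin 3 → ℤ]) :
    polyRep K q (laurentEval (bernsteinUnit q) (bernsteinUnit_commute q) F) =
      Algebra.lmul R K (algebraMap R[Fin 3 → ℤ] K F) := by
  have h : (polyRep K q).comp (laurentEval (bernsteinUnit q) (bernsteinUnit_commute q)) =
      (Algebra.lmul R K).comp (IsScalarTower.toAlgHom R R[Fin 3 → ℤ] K) := by
    refine AddMonoidAlgebra.algHom_ext' (monoidHom_ext_single fun i => ?_)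
      (Subsingleton.elim _ _)
    exact congr(polyRep K q $(laurentEval_single_single _ _ i)).trans
      congr(Units.val $(polyRep_bernsteinUnit K q i))
  exact congr($h F)

end PolynomialRepresentation

section CanonicalMap

open scoped AddMonoidAlgebra

section Map

variable {R S : Type} [CommRing R] [CommRing S] (f : R →+* S) (q : R) (q' : S) (h : f q = q')

theorem map_gen (i : Fin 4) : map f q q' h (gen R q i) = gen S q' i := by
  subst h
  let _ : Algebra R (HeckeAlg S (f q)) :=
    RingHom.toAlgebra' ((algebraMap S (HeckeAlg S (f q))).comp f)
      (fun c x => by simpa using Algebra.commutes (f c) x)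
  change RingQuot.lift _ _ = _
  rw [gen, RingQuot.mkAlgHom]
  exact (RingQuot.lift_mkRingHom_apply _ _ _).trans (FreeAlgebra.lift_ι_apply _ _)

theorem map_algebraMap (r : R) :
    map f q q' h (algebraMap R (HeckeAlg R q) r) = algebraMap S (HeckeAlg S q') (f r) := by
  subst h
  let _ : Algebra R (HeckeAlg S (f q)) :=
    RingHom.toAlgebra' ((algebraMap S (HeckeAlg S (f q))).comp f)
      (fun c x => by simpa using Algebra.commutes (f c) x)
  rw [← (RingQuot.mkAlgHom R (HeckeRel R q)).commutes, RingQuot.mkAlgHom]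
  change RingQuot.lift _ _ = _
  exact (RingQuot.lift_mkRingHom_apply _ _ _).trans (AlgHom.commutes _ r)

end Map

section Lattice

variable {R K : Type} [CommRing R] [Nontrivial R] [Field K] [Algebra R[Fin 3 → ℤ] K]
  [IsFractionRing R[Fin 3 → ℤ] K] [Algebra R K] [IsScalarTower R R[Fin 3 → ℤ] K]
  {q : Rˣ} {B : Subring R}

theorem rotationUnit_inv :
    (rotationUnit K q)⁻¹ =
      monomialUnit R (Fin 3 → ℤ) K (Multiplicative.ofAdd (-1)) * rotationUnit K q ^ 2 := by
  rw [ofAdd_neg, map_inv, ← rotationUnit_cube K q]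
  group

theorem rotationUnit_inv_mem_spread (hq : (q : R) ∈ B) {v : K}
    (hv : v ∈ weightLattice K B q spread) :
    ((rotationUnit K q)⁻¹ : (Module.End R K)ˣ).val v ∈ weightLattice K B q spread := by
  have hmem := monomial_mul_mem_weightLattice (w' := spread) (m := -1) (k := 0) hq
    (fun l => by simp only [spread, Pi.add_apply, Pi.neg_apply, Pi.one_apply]; omega)
    (rotation_mem_spread hq (rotation_mem_spread hq hv))
  rw [zpow_zero, Units.val_one, one_smul] at hmem
  rw [rotationUnit_inv, pow_two]
  exact hmem

theorem polyRep_gen_mem_spread (hq : (q : R) ∈ B) (i : Fin 4) {v : K}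
    (hv : v ∈ weightLattice K B q spread) :
    polyRep K q (gen R q i) v ∈ weightLattice K B q spread := by
  rw [polyRep_gen]
  fin_cases i
  · exact rotation_mem_spread hq hv
  · exact rotationUnit_inv_mem_spread hq hv
  · exact simpleRootOperator_mem_spread hq 0 hv
  · exact simpleRootOperator_mem_spread hq 1 hv

variable {R₀ : Type} [CommRing R₀] (f : R₀ →+* R) (q₀ : R₀) (hq : f q₀ = (q : R))

theorem polyRep_map_mem_spread (h : HeckeAlg R₀ q₀) {v : K}
    (hv : v ∈ weightLattice K f.range q spread) :
    polyRep K q (map f q₀ (q : R) hq h) v ∈ weightLattice K f.range q spread := by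
  have hh : h ∈ Algebra.adjoin R₀ (Set.range (gen R₀ q₀)) := by
    rw [adjoin_range_gen]
    exact Algebra.mem_top
  induction hh using Algebra.adjoin_induction generalizing v with
  | mem _ h =>
    obtain ⟨i, rfl⟩ := h
    rw [map_gen]
    exact polyRep_gen_mem_spread (f.mem_range.2 ⟨q₀, hq⟩) i hv
  | algebraMap r =>
    rw [map_algebraMap, AlgHom.commutes]
    exact Submodule.smul_mem _ (⟨f r, r, rfl⟩ : f.range) hv
  | add _ _ _ _ ha hb =>
    rw [map_add, map_add]
    exact add_mem (ha hv) (hb hv)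
  | mul _ _ _ _ ha hb =>
    rw [map_mul, map_mul]
    exact ha (hb hv)

end Lattice

theorem mem_span_of_laurentEval_mem_range_map {R₀ R : Type} [CommRing R₀] [CommRing R]
    [IsDomain R] (f : R₀ →+* R) (q₀ : R₀) (q : Rˣ) (hq : f q₀ = (q : R)) {F : R[Fin 3 → ℤ]}
    (hF : laurentEval (bernsteinUnit q) (bernsteinUnit_commute q) F ∈ (map f q₀ (q : R) hq).range) :
    F ∈ Submodule.span f.range (Set.range (normalizedMonomial q)) := by
  obtain ⟨h, hh⟩ := hF
  let K := FractionRing R[Fin 3 → ℤ]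
  have h_one : (1 : K) ∈ weightLattice K f.range q spread := by
    have hmem := zpow_smul_monomial_mem (K := K) (w := spread) (l := 0) (k := 0)
      (f.mem_range.2 ⟨q₀, hq⟩) (by decide)
    rwa [monomial_zero, zpow_zero, Units.val_one, one_smul] at hmem
  have hmem := polyRep_map_mem_spread f q₀ hq h h_one
  rw [hh, polyRep_laurentEval, Algebra.coe_lmul_eq_mul, LinearMap.mul_apply_apply, mul_one] at hmem
  exact mem_span_of_algebraMap_mem_weightLattice hmem


section Generators

variable {R₀ R : Type} [CommRing R₀] [CommRing R] (f : R₀ →+* R) (q₀ : R₀) (q : Rˣ)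
  (hq : f q₀ = (q : R))

theorem gen_mem_range_map (i : Fin 4) : gen R (q : R) i ∈ (map f q₀ (q : R) hq).range :=
  ⟨gen R₀ q₀ i, map_gen f q₀ q hq i⟩

theorem algebraMap_mem_range_map : algebraMap R (HeckeAlg R (q : R)) q ∈ (map f q₀ q hq).range :=
  ⟨algebraMap R₀ _ q₀, by rw [map_algebraMap, hq]⟩

theorem scalar_mul_inv_unitOfQuad_mem_range_map {S : HeckeAlg R (q : R)}
    (h : (S + 1) * (S - algebraMap R (HeckeAlg R (q : R)) q) = 0)
    (hS : S ∈ (map f q₀ (q : R) hq).range) :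
    algebraMap R (HeckeAlg R (q : R)) q * ((unitOfQuad q S h)⁻¹ : (HeckeAlg R (q : R))ˣ) ∈
      (map f q₀ (q : R) hq).range := by
  rw [algebraMap_mul_inv_unitOfQuad]
  exact add_mem (sub_mem hS (algebraMap_mem_range_map f q₀ q hq)) (one_mem _)

theorem algebraMap_mul_bernsteinUnit_mem_range_map (i : Fin 3) :
    algebraMap R (HeckeAlg R (q : R)) q * bernsteinUnit q i ∈ (map f q₀ (q : R) hq).range :=
  mul_bernsteinWord_mem (t := TUnit R (q : R)) (s₁ := S1Unit q) (s₂ := S2Unit q)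
    (N := (map f q₀ (q : R) hq).range.toSubmonoid.comap (Units.coeHom _)) (commute_scalarUnit q)
    (gen_mem_range_map f q₀ q hq 0) (gen_mem_range_map f q₀ q hq 2)
    (gen_mem_range_map f q₀ q hq 3)
    (scalar_mul_inv_unitOfQuad_mem_range_map f q₀ q hq (quad_rel R (q : R))
      (gen_mem_range_map f q₀ q hq 2))
    (scalar_mul_inv_unitOfQuad_mem_range_map f q₀ q hq quad_rel_S2
      (gen_mem_range_map f q₀ q hq 3)) i

theorem algebraMap_mul_inv_bernsteinUnit_mem_range_map (i : Fin 3) :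
    algebraMap R (HeckeAlg R (q : R)) q * ((bernsteinUnit q i)⁻¹ : (HeckeAlg R (q : R))ˣ) ∈
      (map f q₀ (q : R) hq).range :=
  mul_inv_bernsteinWord_mem (t := TUnit R (q : R)) (s₁ := S1Unit q) (s₂ := S2Unit q)
    (N := (map f q₀ (q : R) hq).range.toSubmonoid.comap (Units.coeHom _)) (commute_scalarUnit q)
    (gen_mem_range_map f q₀ q hq 1) (gen_mem_range_map f q₀ q hq 2)
    (gen_mem_range_map f q₀ q hq 3)
    (scalar_mul_inv_unitOfQuad_mem_range_map f q₀ q hq (quad_rel R (q : R))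
      (gen_mem_range_map f q₀ q hq 2))
    (scalar_mul_inv_unitOfQuad_mem_range_map f q₀ q hq quad_rel_S2
      (gen_mem_range_map f q₀ q hq 3)) i

theorem spreadGenerators_subset_range_map :
    spreadGenerators (fun i => (bernsteinUnit q i : HeckeAlg R (q : R)))
      (fun i => ((bernsteinUnit q i)⁻¹ : (HeckeAlg R (q : R))ˣ))
      (algebraMap R (HeckeAlg R (q : R)) q) ⊆ (map f q₀ (q : R) hq).range := by
  refine (spreadGenerators_subset_range_laurentEval q _ (bernsteinUnit_commute q)).trans ?_
  rintro _ ⟨l, rfl⟩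
  refine laurentEval_normalizedMonomial_mem q _ _ (C := (map f q₀ (q : R) hq).range.toSubmonoid)
    ?_ ?_ (algebraMap_mul_bernsteinUnit_mem_range_map f q₀ q hq)
    (algebraMap_mul_inv_bernsteinUnit_mem_range_map f q₀ q hq) l
  · have h_prod := congr(Units.val $(bernsteinUnit_prod q))
    rw [Units.val_mul, Units.val_mul, Units.val_pow_eq_pow_val] at h_prod
    exact h_prod ▸ pow_mem (gen_mem_range_map f q₀ q hq 0) 3
  · have h_prod : (bernsteinUnit q 2)⁻¹ * (bernsteinUnit q 1)⁻¹ * (bernsteinUnit q 0)⁻¹ =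
        (TUnit R (q : R))⁻¹ ^ 3 := by
      rw [inv_pow, ← bernsteinUnit_prod]; group
    have h_prod := congr(Units.val $h_prod)
    rw [Units.val_mul, Units.val_mul, Units.val_pow_eq_pow_val] at h_prod
    exact h_prod ▸ pow_mem (gen_mem_range_map f q₀ q hq 1) 3

end Generators

end CanonicalMap

section Intersection

variable {R₀ R : Type} [CommRing R₀] [CommRing R] [IsDomain R] (f : R₀ →+* R) (q₀ : R₀) (q : Rˣ)
  (hq : f q₀ = (q : R))

theorem range_map_inter_adjoin_bernsteinUnit :
    ((map f q₀ (q : R) hq).range : Set (HeckeAlg R (q : R))) ∩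
        (Algebra.adjoin R (Set.range (fun i => (bernsteinUnit q i : HeckeAlg R (q : R))) ∪
          Set.range fun i => ((bernsteinUnit q i)⁻¹ : (HeckeAlg R (q : R))ˣ).val) :
            Subalgebra R (HeckeAlg R (q : R))) =
      (Subring.closure
        (spreadGenerators (fun i => (bernsteinUnit q i : HeckeAlg R (q : R)))
          (fun i => ((bernsteinUnit q i)⁻¹ : (HeckeAlg R (q : R))ˣ))
          (algebraMap R (HeckeAlg R (q : R)) q) ∪
            algebraMap R (HeckeAlg R (q : R)) '' f.range) : Set (HeckeAlg R (q : R))) := by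
  set A : Subalgebra R (HeckeAlg R (q : R)) := Algebra.adjoin R _
  have h_gen : spreadGenerators (fun i => (bernsteinUnit q i : HeckeAlg R (q : R)))
      (fun i => ((bernsteinUnit q i)⁻¹ : (HeckeAlg R (q : R))ˣ))
      (algebraMap R (HeckeAlg R (q : R)) q) ⊆ A.toSubmonoid :=
    spreadGenerators_subset (fun i => Algebra.subset_adjoin (.inl ⟨i, rfl⟩))
      (fun i => Algebra.subset_adjoin (.inr ⟨i, rfl⟩)) (A.algebraMap_mem _)
  refine Set.Subset.antisymm ?_ (Set.subset_inter ?_ ?_)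
  · rintro _ ⟨hx_range, hx_adjoin⟩
    obtain ⟨F, rfl⟩ := adjoin_units_le_laurentEval_range _ (bernsteinUnit_commute q) hx_adjoin
    exact laurentEval_mem_closure_spreadGenerators q _ _ f.range
      (mem_span_of_laurentEval_mem_range_map f q₀ q hq hx_range)
  · refine Subring.closure_le.2 (Set.union_subset (spreadGenerators_subset_range_map f q₀ q hq) ?_)
    rintro _ ⟨_, ⟨r, rfl⟩, rfl⟩
    exact ⟨algebraMap R₀ _ r, map_algebraMap f q₀ q hq r⟩
  · refine Subring.closure_le (t := A.toSubring).2 (Set.union_subset h_gen ?_)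
    rintro _ ⟨r, -, rfl⟩
    exact A.algebraMap_mem r

end Intersection

end HeckeAlg

open HeckeAlg in
theorem statement0_general {R₀ R : Type} [CommRing R₀] [CommRing R] [IsDomain R] (f : R₀ →+* R)
    (q₀ : R₀) (q : Rˣ) (hq : f q₀ = (q : R)) (u : Fin 3 → HeckeAlg R (q : R))
    (hu : ∀ i, Y R (q : R) (q⁻¹ : Rˣ) i * u i = 1) :
    Set.range (map f q₀ (q : R) hq) ∩
        (Algebra.adjoin R (Set.range (Y R (q : R) (q⁻¹ : Rˣ)) ∪ Set.range u) :
          Subalgebra R (HeckeAlg R (q : R))) =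
      (Subring.closure
        (spreadGenerators (Y R (q : R) (q⁻¹ : Rˣ)) u (algebraMap R (HeckeAlg R (q : R)) q) ∪
          Set.range ((algebraMap R (HeckeAlg R (q : R))).comp f)) : Set (HeckeAlg R (q : R))) := by
  have h_inv : u = fun i => ((bernsteinUnit q i)⁻¹ : (HeckeAlg R (q : R))ˣ).val :=
    funext fun i => Units.eq_inv_of_mul_eq_one_left (bernsteinUnit_val q i ▸ hu i)
  have h := range_map_inter_adjoin_bernsteinUnit f q₀ q hq
  rw [h_inv, ← funext (bernsteinUnit_val q), RingHom.coe_comp, Set.range_comp, ← RingHom.coe_range,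
    ← RingHom.coe_range, h]

/-- The intersection of the image of `H` in `H_{ℤ[q^{±1}]}` with the
commutative subalgebra `A` generated over `ℤ[q^{±1}]` by `Y_1^{±1}, Y_2^{±1}, Y_3^{±1}`
equals the `ℤ[q]`-subalgebra of `H_{ℤ[q^{±1}]}` generated by `(Y_1Y_2Y_3)^{±1}`, by
`q(Y_iY_j)^{±1}` for `1 ≤ i ≠ j ≤ 3`, and by `qY_i^{±1}` for `1 ≤ i ≤ 3`.
Here `u i` denotes the (two-sided) inverse of `Y_i`, so that `(Y_1Y_2Y_3)⁻¹ = u_3 u_2 u_1`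
and `(Y_iY_j)⁻¹ = u_j u_i`. -/
theorem statement0 (u : Fin 3 → HLau)
    (hu : ∀ i, YLau i * u i = 1 ∧ u i * YLau i = 1) :
    Set.range ιLau ∩
      (Algebra.adjoin (LaurentPolynomial ℤ) (Set.range YLau ∪ Set.range u) :
        Subalgebra (LaurentPolynomial ℤ) HLau) =
    (Subring.closure
      (({YLau 0 * YLau 1 * YLau 2, u 2 * u 1 * u 0} : Set HLau) ∪
        {x : HLau | ∃ i j : Fin 3, i ≠ j ∧
          (x = qLau * (YLau i * YLau j) ∨ x = qLau * (u j * u i))} ∪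
        {x : HLau | ∃ i : Fin 3, x = qLau * YLau i ∨ x = qLau * u i} ∪
        Set.range structZq) : Set HLau) := by
  exact (statement0_general Polynomial.toLaurent Polynomial.X
    ⟨LaurentPolynomial.T 1, LaurentPolynomial.T (-1), (LaurentPolynomial.T_add 1 (-1)).symm,
      (LaurentPolynomial.T_add (-1) 1).symm⟩ Polynomial.toLaurent_X u fun i => (hu i).1 :)
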